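/- arXiv:2312.11172 — 2 statements merged into one kernel-verified Lean document; each statement's English description precedes it below -/
import Mathlib

section
/- Let q > 0, let Ψ ∈ C(ℝ^{n+1}) be nonnegative, and let μ be the measure on ℝ^{n+1} with dμ(X) = Ψ(X)|x|^{q-n} dx dz for X = (x,z), x ∈ ℝⁿ, z ∈ ℝ. Let (K_m) be a sequence of nonempty compact convex subsets of ℝ^{n+1} converging in the Hausdorff metric to a compact convex set K with nonempty interior; if q < n assume additionally that the origin of ℝⁿ lies in pr_H(int K ∩ ∩_m int K_m), where pr_H is the orthogonal projection onto H = e_{n+1}^⊥ ≅ ℝⁿ. Then μ(K_m) → μ(K), and the weighted surface area measures S_{μ,K_m} converge weakly to S_{μ,K} on S^n. -/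
open MeasureTheory Metric Set Filter
open scoped RealInnerProductSpace Pointwise Topology NNReal ENNReal

noncomputable section

namespace PaperJU

open Classical

/-- Euclidean space ℝⁿ. -/
abbrev E (n : ℕ) := EuclideanSpace ℝ (Fin n)

variable {n : ℕ}

/-- The pairing (x, z) ∈ ℝⁿ × ℝ ↦ ℝ^{n+1}. -/
def pairE (x : E n) (z : ℝ) : E (n + 1) :=
  (EuclideanSpace.equiv (Fin (n + 1)) ℝ).symm (Fin.snoc (EuclideanSpace.equiv (Fin n) ℝ x) z)

/-- Orthogonal projection onto H = e_{n+1}^⊥ ≅ ℝⁿ. -/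
def fstE (X : E (n + 1)) : E n :=
  (EuclideanSpace.equiv (Fin n) ℝ).symm (Fin.init (EuclideanSpace.equiv (Fin (n + 1)) ℝ X))

/-- The last coordinate of X ∈ ℝ^{n+1}. -/
def sndE (X : E (n + 1)) : ℝ := X (Fin.last n)

/-- Reflection across H = e_{n+1}^⊥. -/
def reflH (X : E (n + 1)) : E (n + 1) := pairE (fstE X) (-(sndE X))

/-- Epigraph of u, as a subset of ℝⁿ × ℝ. -/
def epi (u : E n → EReal) : Set (E n × ℝ) := {p | u p.1 ≤ (p.2 : EReal)}

/-- Epigraph of u, as a subset of ℝ^{n+1}. -/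
def epiF (u : E n → EReal) : Set (E (n + 1)) := {X | u (fstE X) ≤ ((sndE X : ℝ) : EReal)}

/-- Effective domain of u. -/
def dom (u : E n → EReal) : Set (E n) := {x | u x ≠ ⊤}

/-- u ∈ Conv(ℝⁿ): convex (epigraph convex), lower semicontinuous, proper, never -∞. -/
structure IsConvFn (u : E n → EReal) : Prop where
  convex_epi : Convex ℝ (epi u)
  lsc : LowerSemicontinuous u
  ne_bot : ∀ x, u x ≠ ⊥
  exists_ne_top : ∃ x, u x ≠ ⊤

/-- u ∈ Conv_cd(ℝⁿ): convex with compact domain. -/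
def IsConvCd (u : E n → EReal) : Prop := IsConvFn u ∧ IsCompact (dom u)

/-- u ∈ Conv_coe(ℝⁿ): convex and coercive. -/
def IsConvCoe (u : E n → EReal) : Prop :=
  IsConvFn u ∧ Tendsto u (cocompact (E n)) (𝓝 (⊤ : EReal))

/-- Fenchel–Legendre transform of an extended-real-valued function. -/
def legendre (u : E n → EReal) (y : E n) : EReal :=
  ⨆ x : E n, ((⟪x, y⟫ : ℝ) : EReal) - u x

/-- Real-valued Fenchel–Legendre transform (when finite). -/
def legendreR (u : E n → EReal) (y : E n) : ℝ := (legendre u y).toReal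

/-- Fenchel–Legendre transform of a real-valued function. -/
def conjR (f : E n → ℝ) (x : E n) : EReal := ⨆ y : E n, ((⟪x, y⟫ - f y : ℝ) : EReal)

/-- The perturbation u_t = (u* + tζ)*. -/
def pert (u : E n → EReal) (ζ : E n → ℝ) (t : ℝ) : E n → EReal :=
  conjR fun y => legendreR u y + t * ζ y

/-- e^{-a} for a ∈ ℝ ∪ {±∞}, with e^{-(+∞)} = 0. -/
def expNeg (a : EReal) : ℝ := if a = ⊤ then 0 else Real.exp (-a.toReal)

/-- The functional volume μ_n(u) = ∫ e^{-u}. -/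
def muN (u : E n → EReal) : ℝ := ∫ x : E n, expNeg (u x)

/-- The q-th dual functional volume μ_q(u) = ∫ e^{-u(x)} |x|^{q-n} dx. -/
def muQ (q : ℝ) (u : E n → EReal) : ℝ := ∫ x : E n, expNeg (u x) * ‖x‖ ^ (q - (n : ℝ))

/-- The gradient ∇u, computed through the real-valued representative of u. -/
def grad (u : E n → EReal) (x : E n) : E n := gradient (fun y => (u y).toReal) x

/-- ν is an outer unit normal vector to K at the boundary point y. -/
def IsOuterNormalAt (K : Set (E n)) (ν y : E n) : Prop :=
  ‖ν‖ = 1 ∧ ∀ x ∈ K, (⟪x, ν⟫ : ℝ) ≤ ⟪y, ν⟫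

/-- Support function of a set. -/
def suppFn (K : Set (E n)) (x : E n) : ℝ := (⨆ y ∈ K, ((⟪y, x⟫ : ℝ) : EReal)).toReal

/-- Infimal convolution. -/
def infConv (u v : E n → EReal) (x : E n) : EReal := ⨅ y : E n, u y + v (x - y)

/-- Epi-multiplication t ⊡ v. -/
def epiMul (t : ℝ) (v : E n → EReal) : E n → EReal :=
  if t = 0 then fun x => if x = 0 then (0 : EReal) else ⊤
  else fun x => (t : EReal) * v (t⁻¹ • x)

/-- Convex indicator function of a set. -/
def indicatorE (A : Set (E n)) : E n → EReal := fun x => if x ∈ A then (0 : EReal) else ⊤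

/-- ζ ∈ C_rec(ℝⁿ), with (1-homogeneously extended) recession function ρ. -/
structure IsCRec (ζ ρ : E n → ℝ) : Prop where
  cont : Continuous ζ
  rec_cont : Continuous ρ
  rec_zero : ρ 0 = 0
  rec_homog : ∀ c : ℝ, 0 ≤ c → ∀ x, ρ (c • x) = c * ρ x
  rec_lim : ∀ ν : E n, ‖ν‖ = 1 → Tendsto (fun t : ℝ => ζ (t • ν) / t) atTop (𝓝 (ρ ν))
  diff_bdd : ∃ C : ℝ, ∀ x, |ρ x - ζ x| ≤ C

/-- Wulff shape of f : S^{n-1} → ℝ. -/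
def wulff (f : E n → ℝ) : Set (E n) := ⋂ ν ∈ sphere (0 : E n) 1, {x : E n | (⟪x, ν⟫ : ℝ) ≤ f ν}

/-- Lower boundary function ⌊K⌋ of a subset of ℝ^{n+1}. -/
def lfloor (K : Set (E (n + 1))) (x : E n) : EReal := ⨅ t ∈ {t : ℝ | pairE x t ∈ K}, (t : EReal)

/-- M_u, the maximum of u over its domain. -/
def maxVal (u : E n → EReal) : ℝ := sSup ((fun x => (u x).toReal) '' dom u)

/-- The body K^u = (epi(u - M_u) ∩ R_H(epi(u - M_u))) + M_u e_{n+1}. -/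
def Ku (u : E n → EReal) : Set (E (n + 1)) :=
  (fun X => X + pairE (0 : E n) (maxVal u)) ''
    ({X : E (n + 1) | u (fstE X) ≤ ((sndE X + maxVal u : ℝ) : EReal)} ∩
      reflH '' {X : E (n + 1) | u (fstE X) ≤ ((sndE X + maxVal u : ℝ) : EReal)})

/-- The vertical segment ℓ_s = {r e_{n+1} : r ∈ [0, s]}. -/
def segZ (n : ℕ) (s : ℝ) : Set (E (n + 1)) := (fun r : ℝ => pairE (0 : E n) r) '' Icc 0 s

/-- Gnomonic projection. -/
def gnom (ν : E (n + 1)) : E n := (sndE ν)⁻¹ • fstE ν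

/-- The function ζ̄ on Sⁿ built from ζ and its recession function ρ. -/
def zbar (ζ ρ : E n → ℝ) (ν : E (n + 1)) : ℝ :=
  if sndE ν < 0 then ζ (gnom ν) / Real.sqrt (1 + ‖gnom ν‖ ^ 2)
  else if 0 < sndE ν then ζ (gnom (reflH ν)) / Real.sqrt (1 + ‖gnom (reflH ν)‖ ^ 2)
  else ρ (fstE ν)

/-- Weighted surface area measure S_{μ,K}, realized via a choice of Gauss map N. -/
def surfMeas (w : E (n + 1) → ℝ) (K : Set (E (n + 1))) (N : E (n + 1) → E (n + 1)) :
    Measure (E (n + 1)) :=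
  Measure.map N (((μH[(n : ℝ)]).restrict (frontier K)).withDensity fun X => ENNReal.ofReal (w X))

/-- φ evaluated at a ∈ EReal (0 at +∞). -/
def phiE (φ : ℝ → ℝ) (a : EReal) : ℝ := if a = ⊤ then 0 else φ a.toReal

/-- Φ(a) = ∫_a^{+∞} φ(z) dz, extended by 0 at a = +∞. -/
def PhiE (φ : ℝ → ℝ) (a : EReal) : ℝ := if a = ⊤ then 0 else ∫ z in Ici a.toReal, φ z

/-- Standard Gaussian density on ℝ^m. -/
def gaussDensity (m : ℕ) (X : E m) : ℝ :=
  (2 * Real.pi) ^ (-(m : ℝ) / 2) * Real.exp (-(‖X‖ ^ 2 / 2))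

/-- Standard Gaussian measure on ℝ^m. -/
def gaussMeas (m : ℕ) : Measure (E m) :=
  volume.withDensity fun X => ENNReal.ofReal (gaussDensity m X)

/-- Gaussian symmetric-difference distance. -/
def dGauss {m : ℕ} (K L : Set (E m)) : ℝ := (gaussMeas m (symmDiff K L)).toReal

/-- The class K^{n+1}_+. -/
def KPlus (n : ℕ) : Set (Set (E (n + 1))) :=
  {K | Convex ℝ K ∧ IsClosed K ∧ (interior K).Nonempty ∧
    IsCompact (fstE '' K) ∧ Convex ℝ (fstE '' K) ∧ (interior (fstE '' K)).Nonempty}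

/-- Epi-convergence of a sequence of functions. -/
def EpiConverges (um : ℕ → E n → EReal) (u : E n → EReal) : Prop :=
  ∀ x : E n,
    (∀ xs : ℕ → E n, Tendsto xs atTop (𝓝 x) →
      u x ≤ Filter.liminf (fun m => um m (xs m)) atTop) ∧
    ∃ xs : ℕ → E n, Tendsto xs atTop (𝓝 x) ∧
      Tendsto (fun m => um m (xs m)) atTop (𝓝 (u x))


lemma exists_normal {d : ℕ} {L : Set (E d)} (hc : Convex ℝ L) (hi : (interior L).Nonempty)
    {Y : E d} (hY : Y ∈ frontier L) : ∃ ν, IsOuterNormalAt L ν Y := by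
  obtain ⟨f, hf⟩ := geometric_hahn_banach_open_point hc.interior isOpen_interior hY.2
  set v := (InnerProductSpace.toDual ℝ (E d)).symm f with hv
  have hfv : ∀ x, f x = ⟪x, v⟫ := by
    intro x
    rw [real_inner_comm, hv, InnerProductSpace.toDual_symm_apply]
  obtain ⟨a, ha⟩ := hi
  have hv0 : v ≠ 0 := by
    intro h0
    have := hf a ha
    rw [hfv, hfv, h0] at this
    simp at this
  have hle : ∀ x ∈ L, f x ≤ f Y := by
    intro x hx
    have hx' : x ∈ closure (interior L) := by
      rw [hc.closure_interior_eq_closure_of_nonempty_interior ⟨a, ha⟩]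
      exact subset_closure hx
    have : closure (interior L) ⊆ {x | f x ≤ f Y} :=
      closure_minimal (fun x hx => (hf x hx).le) (isClosed_le f.continuous continuous_const)
    exact this hx'
  have hn : 0 < ‖v‖ := norm_pos_iff.2 hv0
  refine ⟨‖v‖⁻¹ • v, ?_, fun x hx => ?_⟩
  · rw [norm_smul, norm_inv, norm_norm, inv_mul_cancel₀ hn.ne']
  · rw [inner_smul_right, inner_smul_right]
    have := hle x hx
    rw [hfv, hfv] at this
    gcongr

lemma mem_of_closedBall {d : ℕ} {K L : Set (E d)} (hc : Convex ℝ L) (hcl : IsClosed L)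
    {δ r : ℝ} (hr : 0 ≤ r) (hδ : δ ≤ r) (h : ∀ k ∈ K, ∃ y ∈ L, dist k y ≤ δ) {Z : E d}
    (hZ : closedBall Z r ⊆ K) : Z ∈ L := by
  by_contra hZL
  obtain ⟨f, u, hf, hu⟩ := geometric_hahn_banach_closed_point hc hcl hZL
  set v := (InnerProductSpace.toDual ℝ (E d)).symm f with hv
  have hfv : ∀ x, f x = ⟪x, v⟫ := by
    intro x
    rw [real_inner_comm, hv, InnerProductSpace.toDual_symm_apply]
  have hk : Z + (r / ‖v‖) • v ∈ K := by
    apply hZ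
    rw [mem_closedBall, dist_eq_norm, add_sub_cancel_left, norm_smul, Real.norm_eq_abs, abs_div,
      abs_norm, abs_of_nonneg hr]
    by_cases h0 : ‖v‖ = 0
    · rw [h0]; simpa
    · rw [div_mul_cancel₀ _ h0]
  obtain ⟨y, hy, hd⟩ := h _ hk
  have h1 := hf y hy
  have h2 : f (Z + (r / ‖v‖) • v) = f Z + r * ‖v‖ := by
    rw [map_add, map_smul, hfv v, real_inner_self_eq_norm_sq, smul_eq_mul]
    by_cases h0 : ‖v‖ = 0
    · rw [h0]; simp
    · field_simp
  have h3 : f (Z + (r / ‖v‖) • v) - f y ≤ δ * ‖v‖ := by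
    rw [← map_sub, hfv]
    refine (real_inner_le_norm _ _).trans ?_
    rw [dist_eq_norm] at hd
    gcongr
  have h4 : δ * ‖v‖ ≤ r * ‖v‖ := by gcongr
  linarith

lemma exists_expand {d : ℕ} {C L : Set (E d)} (hC : IsClosed C) (hCc : Convex ℝ C)
    (hCi : (interior C).Nonempty) (hL : IsClosed L) (hCL : C ⊆ L) {δ : ℝ}
    (h : ∀ x ∈ L, ∃ c ∈ C, dist x c ≤ δ) {Z : E d} (hZ : Z ∈ frontier C) :
    ∃ X ∈ frontier L, ∃ ν : E d, ∃ t : ℝ, 0 ≤ t ∧ IsOuterNormalAt C ν Z ∧ X = Z + t • ν ∧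
      dist X Z ≤ δ := by
  obtain ⟨ν, hν⟩ := exists_normal hCc hCi hZ
  have hZC : Z ∈ C := hC.frontier_subset hZ
  have hb : ∀ t : ℝ, 0 ≤ t → Z + t • ν ∈ L → t ≤ δ := by
    intro t ht hx
    obtain ⟨c, hc, hd⟩ := h _ hx
    have h1 := hν.2 c hc
    have h2 : ⟪Z + t • ν - c, ν⟫ ≤ ‖Z + t • ν - c‖ * ‖ν‖ := real_inner_le_norm _ _
    rw [inner_sub_left, inner_add_left, inner_smul_left, real_inner_self_eq_norm_sq, hν.1] at h2
    rw [dist_eq_norm] at hd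
    simp at h2
    linarith
  have hcont : Continuous fun t : ℝ => Z + t • ν := by fun_prop
  set T := Icc 0 δ ∩ (fun t : ℝ => Z + t • ν) ⁻¹' L with hT
  have hTc : IsCompact T := isCompact_Icc.inter_right (hL.preimage hcont)
  have h0 : (0 : ℝ) ∈ T := by
    have hm : Z + (0 : ℝ) • ν ∈ L := by simpa using hCL hZC
    exact ⟨⟨le_rfl, hb 0 le_rfl hm⟩, hm⟩
  obtain ⟨t, ht, hmax⟩ := hTc.exists_isGreatest ⟨0, h0⟩
  refine ⟨Z + t • ν, ⟨subset_closure ht.2, fun hInteg => ?_⟩, ν, t, ht.1.1, hν, rfl, ?_⟩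
  · have hn : (fun t : ℝ => Z + t • ν) ⁻¹' interior L ∈ 𝓝 t :=
      (isOpen_interior.preimage hcont).mem_nhds hInteg
    have hev : ∀ᶠ s in 𝓝[>] t, s ∈ (fun t : ℝ => Z + t • ν) ⁻¹' interior L ∧ s ∈ Ioi t :=
      Filter.inter_mem (mem_nhdsWithin_of_mem_nhds hn) self_mem_nhdsWithin
    obtain ⟨s, hs1, hs2⟩ := hev.exists
    have hs0 : 0 ≤ s := ht.1.1.trans (le_of_lt hs2)
    have hsL : Z + s • ν ∈ L := interior_subset hs1
    have := hmax (show s ∈ T from ⟨⟨hs0, hb s hs0 hsL⟩, hsL⟩)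
    exact absurd hs2 (not_lt.2 this)
  · rw [dist_eq_norm, add_sub_cancel_left, norm_smul, hν.1, mul_one, Real.norm_eq_abs,
      abs_of_nonneg ht.1.1]
    exact ht.1.2

lemma hausdorff_le_of_anti {X Y : Type*} [MetricSpace X] [MeasurableSpace X] [BorelSpace X]
    [MetricSpace Y] [MeasurableSpace Y] [BorelSpace Y] {f : X → Y} {A : Set X} {c : ℝ≥0}
    (h : ∀ x ∈ A, ∀ y ∈ A, dist x y ≤ c * dist (f x) (f y)) {d : ℝ} (hd : 0 ≤ d) :
    μH[d] A ≤ (c : ℝ≥0∞) ^ d * μH[d] (f '' A) := by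
  rcases A.eq_empty_or_nonempty with rfl | ⟨a, ha⟩
  · simp
  have : Nonempty X := ⟨a⟩
  have hl : LipschitzOnWith c (Function.invFunOn f A) (f '' A) := by
    apply LipschitzOnWith.of_dist_le_mul
    intro x hx y hy
    have h1 := h _ (Function.invFunOn_mem hx) _ (Function.invFunOn_mem hy)
    rwa [Function.invFunOn_eq hx, Function.invFunOn_eq hy] at h1
  refine (measure_mono ?_).trans (hl.hausdorffMeasure_image_le hd)
  intro x hx
  have hx' : f x ∈ f '' A := ⟨x, hx, rfl⟩
  refine ⟨f x, hx', ?_⟩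
  have h1 := h _ (Function.invFunOn_mem hx') _ hx
  rw [Function.invFunOn_eq hx', dist_self, mul_zero] at h1
  exact dist_le_zero.1 h1

lemma hausdorff_mono {d : ℕ} {C L : Set (E d)} (hC : IsClosed C) (hCc : Convex ℝ C)
    (hCi : (interior C).Nonempty) (hL : IsClosed L) (hCL : C ⊆ L) {δ : ℝ}
    (h : ∀ x ∈ L, ∃ c ∈ C, dist x c ≤ δ) {A : Set (E d)} (hA : A ⊆ frontier C) {s : ℝ}
    (hs : 0 ≤ s) :
    μH[s] A ≤ μH[s] (frontier L ∩ {X | ∃ Z ∈ A, dist X Z ≤ δ}) := by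
  have hex := fun Z : E d => fun hZ : Z ∈ frontier C => exists_expand hC hCc hCi hL hCL h hZ
  choose! σ h1 ν t h2 h3 h4 h5 using hex
  have hant : ∀ x ∈ A, ∀ y ∈ A, dist x y ≤ (1 : ℝ≥0) * dist (σ x) (σ y) := by
    intro x hx y hy
    have hx' := hA hx
    have hy' := hA hy
    rw [NNReal.coe_one, one_mul, dist_eq_norm, dist_eq_norm]
    have e : σ x - σ y = (x - y) + (t x • ν x - t y • ν y) := by
      rw [h4 x hx', h4 y hy']; abel
    have k1 := (h3 x hx').2 y (hC.frontier_subset hy')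
    have k2 := (h3 y hy').2 x (hC.frontier_subset hx')
    have k3 : ‖x - y‖ ^ 2 ≤ ⟪σ x - σ y, x - y⟫ := by
      rw [e, inner_add_left, real_inner_self_eq_norm_sq, inner_sub_left, inner_smul_left,
        inner_smul_left, inner_sub_right, inner_sub_right, real_inner_comm x (ν x),
        real_inner_comm y (ν x), real_inner_comm x (ν y), real_inner_comm y (ν y)]
      have m1 := mul_nonneg (h2 x hx') (sub_nonneg.2 k1)
      have m2 := mul_nonneg (h2 y hy') (sub_nonneg.2 k2)
      simp only [conj_trivial]
      nlinarith
    have k4 := k3.trans (real_inner_le_norm _ _)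
    rcases (norm_nonneg (x - y)).eq_or_lt with h0 | h0
    · rw [← h0]; exact norm_nonneg _
    · nlinarith
  refine (hausdorff_le_of_anti hant hs).trans ?_
  rw [ENNReal.coe_one, ENNReal.one_rpow, one_mul]
  apply measure_mono
  rintro _ ⟨x, hx, rfl⟩
  exact ⟨h1 x (hA hx), x, hx, h5 x (hA hx)⟩

/-- Deleting the i-th coordinate. -/
def prj (i : Fin (n + 1)) (X : E (n + 1)) : Fin n → ℝ := fun j => X (i.succAbove j)

lemma prj_continuous (i : Fin (n + 1)) : Continuous (prj (n := n) i) := by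
  unfold prj; fun_prop

/-- Points of L having a normal whose i-th coordinate has sign s and size at least c. -/
def patch (L : Set (E (n + 1))) (i : Fin (n + 1)) (s c : ℝ) : Set (E (n + 1)) :=
  {Y | Y ∈ L ∧ ∃ ν, IsOuterNormalAt L ν Y ∧ c ≤ s * ν i}

lemma inner_split (i : Fin (n + 1)) (X Y : E (n + 1)) :
    (⟪X, Y⟫ : ℝ) = X i * Y i + ∑ j, prj i X j * prj i Y j := by
  rw [PiLp.inner_apply, Fin.sum_univ_succAbove _ i]
  simp only [prj, RCLike.inner_apply, conj_trivial]
  congr 1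
  · ring
  · exact Finset.sum_congr rfl fun j _ => by ring

lemma abs_coord_le (X : E (n + 1)) (i : Fin (n + 1)) : |X i| ≤ ‖X‖ := by
  have := PiLp.norm_apply_le X i
  simpa using this

lemma norm_le_sum (X : E (n + 1)) : ‖X‖ ≤ ∑ i, |X i| := by
  have h1 : ‖X‖ ^ 2 ≤ (∑ i, |X i|) ^ 2 := by
    rw [EuclideanSpace.real_norm_sq_eq]
    calc ∑ i, X i ^ 2 = ∑ i, |X i| ^ 2 := by simp
      _ ≤ (∑ i, |X i|) ^ 2 := Finset.sum_sq_le_sq_sum_of_nonneg (fun i _ => abs_nonneg _)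
  exact abs_le_of_sq_le_sq' h1 (Finset.sum_nonneg fun i _ => abs_nonneg _) |>.2

lemma patch_key {L : Set (E (n + 1))} {i : Fin (n + 1)} {s : ℝ} (hs : s * s = 1)
    {ν Y Y' : E (n + 1)} (hν : IsOuterNormalAt L ν Y) (hp : 0 < s * ν i) (hY' : Y' ∈ L) :
    s * Y' i ≤ s * Y i - ∑ j, (prj i Y' j - prj i Y j) * (prj i ν j / (s * ν i)) := by
  have h := hν.2 Y' hY'
  rw [inner_split i, inner_split i] at h
  have e : ∑ j, (prj i Y' j - prj i Y j) * (prj i ν j / (s * ν i))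
      = (∑ j, prj i Y' j * prj i ν j - ∑ j, prj i Y j * prj i ν j) / (s * ν i) := by
    rw [← Finset.sum_sub_distrib, Finset.sum_div]
    exact Finset.sum_congr rfl fun j _ => by ring
  rw [e, le_sub_iff_add_le, ← le_sub_iff_add_le', div_le_iff₀ hp]
  have : (s * Y i - s * Y' i) * (s * ν i) = (Y i - Y' i) * ν i := by
    linear_combination (Y i - Y' i) * ν i * hs
  rw [this]
  linarith

lemma prj_abs_le {L : Set (E (n + 1))} {Y ν : E (n + 1)} (hν : IsOuterNormalAt L ν Y)
    (i : Fin (n + 1)) (j : Fin n) : |prj i ν j| ≤ 1 := hν.1 ▸ abs_coord_le ν _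

lemma sum_bound {L : Set (E (n + 1))} {Y ν : E (n + 1)} (hν : IsOuterNormalAt L ν Y)
    {i : Fin (n + 1)} {s c : ℝ} (hc : 0 < c) (hp : c ≤ s * ν i) (x y : Fin n → ℝ) :
    |∑ j, (x j - y j) * (prj i ν j / (s * ν i))| ≤ n / c * dist x y := by
  calc |∑ j, (x j - y j) * (prj i ν j / (s * ν i))|
      ≤ ∑ j, |(x j - y j) * (prj i ν j / (s * ν i))| := Finset.abs_sum_le_sum_abs _ _
    _ ≤ ∑ _j : Fin n, dist x y * (1 / c) := by
        refine Finset.sum_le_sum fun j _ => ?_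
        rw [abs_mul, abs_div, abs_of_pos (hc.trans_le hp)]
        have h1 : |x j - y j| ≤ dist x y := by
          rw [← Real.dist_eq]; exact dist_le_pi_dist x y j
        have h2 : |prj i ν j| / (s * ν i) ≤ 1 / c := by
          have := prj_abs_le hν i j
          gcongr
        exact mul_le_mul h1 h2 (div_nonneg (abs_nonneg _) (hc.trans_le hp).le) dist_nonneg
    _ = n / c * dist x y := by simp; ring

lemma patch_anti {L : Set (E (n + 1))} {i : Fin (n + 1)} {s c : ℝ} (hs : s * s = 1) (hc : 0 < c)
    {Y Y' : E (n + 1)} (hY : Y ∈ patch L i s c) (hY' : Y' ∈ patch L i s c) :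
    dist Y Y' ≤ (n / c + n) * dist (prj i Y) (prj i Y') := by
  obtain ⟨hYL, ν, hν, hp⟩ := hY
  obtain ⟨hYL', ν', hν', hp'⟩ := hY'
  have h1 := patch_key hs hν (hc.trans_le hp) hYL'
  have h2 := patch_key hs hν' (hc.trans_le hp') hYL
  have b1 := sum_bound hν hc hp (prj i Y') (prj i Y)
  have b2 := sum_bound hν' hc hp' (prj i Y) (prj i Y')
  rw [dist_comm] at b1
  have h3 : |s * (Y i - Y' i)| ≤ n / c * dist (prj i Y) (prj i Y') := by
    rw [abs_le] at *
    constructor <;> nlinarith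
  have hs1 : |s| = 1 := by
    have : |s| * |s| = 1 := by rw [← abs_mul, hs, abs_one]
    nlinarith [abs_nonneg s]
  rw [abs_mul, hs1, one_mul] at h3
  rw [dist_eq_norm]
  refine (norm_le_sum _).trans ?_
  rw [Fin.sum_univ_succAbove _ i, add_mul]
  refine add_le_add h3 ?_
  calc ∑ j, |(Y - Y') (i.succAbove j)| ≤ ∑ _j : Fin n, dist (prj i Y) (prj i Y') := by
        refine Finset.sum_le_sum fun j _ => ?_
        exact dist_le_pi_dist (prj i Y) (prj i Y') j
    _ = n * dist (prj i Y) (prj i Y') := by simp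

lemma patch_measure {L : Set (E (n + 1))} {i : Fin (n + 1)} {s c : ℝ} (hs : s * s = 1) (hc : 0 < c)
    {S : Set (E (n + 1))} (hS : S ⊆ patch L i s c) (A : Set (Fin n → ℝ)) :
    μH[(n : ℝ)] (S ∩ prj i ⁻¹' A) ≤ ((n / c + n : ℝ).toNNReal : ℝ≥0∞) ^ (n : ℝ) * volume A := by
  have hnn : (0 : ℝ) ≤ n / c + n := by positivity
  have h := hausdorff_le_of_anti (A := S ∩ prj i ⁻¹' A) (f := prj i)
    (c := (n / c + n : ℝ).toNNReal) (d := (n : ℝ))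
    (fun x hx y hy => by
      rw [Real.coe_toNNReal _ hnn]
      exact patch_anti hs hc (hS hx.1) (hS hy.1)) (by positivity)
  refine h.trans (mul_le_mul' le_rfl ?_)
  have : (μH[(n : ℝ)] : Measure (Fin n → ℝ)) = volume := by
    simpa using (hausdorffMeasure_pi_real (ι := Fin n))
  rw [this]
  apply measure_mono
  rintro _ ⟨x, hx, rfl⟩
  exact hx.2

lemma exists_coord {ν : E (n + 1)} (hν : ‖ν‖ = 1) :
    ∃ i : Fin (n + 1), 1 / ((n : ℝ) + 1) ≤ |ν i| := by
  by_contra! h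
  have h1 := norm_le_sum ν
  have h2 : ∑ i, |ν i| < ∑ _i : Fin (n + 1), 1 / ((n : ℝ) + 1) :=
    Finset.sum_lt_sum_of_nonempty Finset.univ_nonempty fun i _ => h i
  have h3 : ∑ _i : Fin (n + 1), 1 / ((n : ℝ) + 1) = 1 := by
    simp
    field_simp
  linarith

lemma frontier_finite {L : Set (E (n + 1))} (hL : IsCompact L) (hc : Convex ℝ L)
    (hi : (interior L).Nonempty) : μH[(n : ℝ)] (frontier L) < ∞ := by
  have hcpos : (0 : ℝ) < 1 / ((n : ℝ) + 1) := by positivity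
  have hfin : ∀ (i : Fin (n + 1)) (s : ℝ), s * s = 1 →
      μH[(n : ℝ)] (patch L i s (1 / ((n : ℝ) + 1))) < ∞ := by
    intro i s hs
    have h := patch_measure hs hcpos (le_refl (patch L i s (1 / ((n : ℝ) + 1)))) (prj i '' L)
    refine lt_of_le_of_lt ((measure_mono ?_).trans h) ?_
    · intro x hx
      exact ⟨hx, x, hx.1, rfl⟩
    · refine ENNReal.mul_lt_top (ENNReal.rpow_lt_top_of_nonneg (by positivity) (by simp)) ?_
      exact (hL.image (prj_continuous i)).measure_lt_top
  have hsub : frontier L ⊆ ⋃ i : Fin (n + 1), (patch L i 1 (1 / ((n : ℝ) + 1)) ∪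
      patch L i (-1) (1 / ((n : ℝ) + 1))) := by
    intro Y hY
    obtain ⟨ν, hν⟩ := exists_normal hc hi hY
    have hYL := hL.isClosed.frontier_subset hY
    obtain ⟨i, hi⟩ := exists_coord hν.1
    refine mem_iUnion.2 ⟨i, ?_⟩
    rcases le_abs.1 hi with h | h
    · exact Or.inl ⟨hYL, ν, hν, by simpa using h⟩
    · exact Or.inr ⟨hYL, ν, hν, by simpa using h⟩
  refine (measure_mono hsub).trans_lt ?_
  refine (measure_iUnion_fintype_le _ _).trans_lt ?_
  refine ENNReal.sum_lt_top.2 fun i _ => ?_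
  refine (measure_union_le _ _).trans_lt ?_
  exact ENNReal.add_lt_top.2 ⟨hfin i 1 (by norm_num), hfin i (-1) (by norm_num)⟩

/-- The affine function attached to a normal pair. -/
def aff (i : Fin (n + 1)) (s : ℝ) (p : E (n + 1) × E (n + 1)) (x : Fin n → ℝ) : ℝ :=
  s * p.1 i - ∑ j, (x j - prj i p.1 j) * (prj i p.2 j / (s * p.2 i))

lemma aff_sub (i : Fin (n + 1)) (s : ℝ) (p : E (n + 1) × E (n + 1)) (x y : Fin n → ℝ) :
    aff i s p x - aff i s p y = - ∑ j, (x j - y j) * (prj i p.2 j / (s * p.2 i)) := by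
  have : ∑ j, (x j - y j) * (prj i p.2 j / (s * p.2 i)) =
      ∑ j, (x j - prj i p.1 j) * (prj i p.2 j / (s * p.2 i)) -
      ∑ j, (y j - prj i p.1 j) * (prj i p.2 j / (s * p.2 i)) := by
    rw [← Finset.sum_sub_distrib]
    exact Finset.sum_congr rfl fun j _ => by ring
  unfold aff
  rw [this]; ring

/-- Linear part of the affine function. -/
def affLin (i : Fin (n + 1)) (s : ℝ) (ν : E (n + 1)) : (Fin n → ℝ) →L[ℝ] ℝ :=
  - ∑ j, (prj i ν j / (s * ν i)) • ContinuousLinearMap.proj (R := ℝ) (φ := fun _ : Fin n => ℝ) j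

lemma affLin_apply (i : Fin (n + 1)) (s : ℝ) (ν : E (n + 1)) (v : Fin n → ℝ) :
    affLin i s ν v = - ∑ j, v j * (prj i ν j / (s * ν i)) := by
  simp [affLin, mul_comm]

lemma aff_hasFDerivAt (i : Fin (n + 1)) (s : ℝ) (p : E (n + 1) × E (n + 1)) (x : Fin n → ℝ) :
    HasFDerivAt (aff i s p) (affLin i s p.2) x := by
  have e : aff i s p = fun y => affLin i s p.2 y + aff i s p 0 := by
    funext y
    have := aff_sub i s p y 0
    rw [affLin_apply]
    simp at this
    linarith
  rw [e]
  exact (affLin i s p.2).hasFDerivAt.add_const _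

lemma unique_of_same_lin {i : Fin (n + 1)} {s : ℝ} (hs : s * s = 1) {ν ν' : E (n + 1)}
    (h1 : ‖ν‖ = 1) (h1' : ‖ν'‖ = 1) (hp : 0 < s * ν i) (hp' : 0 < s * ν' i)
    (he : affLin i s ν = affLin i s ν') : ν = ν' := by
  have hcoord : ∀ j : Fin n, prj i ν j / (s * ν i) = prj i ν' j / (s * ν' i) := by
    intro j
    have := congrArg (fun l => l (Pi.single j 1)) he
    simp only [affLin_apply] at this
    simpa [Pi.single_apply] using this
  have hsm : ν = ((s * ν i) / (s * ν' i)) • ν' := by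
    ext k
    rcases Fin.eq_self_or_eq_succAbove i k with rfl | ⟨j, rfl⟩
    · have hs0 : s ≠ 0 := by rintro rfl; simp at hs
      have : ν' k ≠ 0 := by intro h; rw [h] at hp'; simp at hp'
      simp; field_simp
    · have := hcoord j
      simp only [prj] at this
      rw [div_eq_div_iff hp.ne' hp'.ne'] at this
      simp only [PiLp.smul_apply, smul_eq_mul]
      rw [div_mul_eq_mul_div, eq_div_iff hp'.ne', this]; ring
  have hn : (s * ν i) / (s * ν' i) = 1 := by
    have := congrArg norm hsm
    rw [norm_smul, h1, h1', Real.norm_eq_abs, abs_of_pos (div_pos hp hp'), mul_one] at this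
    exact this.symm
  rw [hn, one_smul] at hsm
  exact hsm

lemma null_two_normals {L : Set (E (n + 1))} {i : Fin (n + 1)} {s c : ℝ} (hs : s * s = 1)
    (hc : 0 < c) :
    μH[(n : ℝ)] {Y | Y ∈ L ∧ ∃ ν ν', IsOuterNormalAt L ν Y ∧ IsOuterNormalAt L ν' Y ∧ c ≤ s * ν i ∧
      c ≤ s * ν' i ∧ ν ≠ ν'} = 0 := by
  set S := {Y | Y ∈ L ∧ ∃ ν ν', IsOuterNormalAt L ν Y ∧ IsOuterNormalAt L ν' Y ∧ c ≤ s * ν i ∧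
      c ≤ s * ν' i ∧ ν ≠ ν'} with hS
  have hSp : S ⊆ patch L i s c := by
    rintro Y ⟨hY, ν, ν', h1, h2, h3, h4, h5⟩
    exact ⟨hY, ν, h1, h3⟩
  let I := {p : E (n + 1) × E (n + 1) // p.1 ∈ L ∧ IsOuterNormalAt L p.2 p.1 ∧ c ≤ s * p.2 i}
  rcases isEmpty_or_nonempty I with hI | hI
  · have : S = ∅ := by
      refine eq_empty_of_forall_notMem ?_
      rintro Y ⟨hY, ν, ν', h1, h2, h3, h4, h5⟩
      exact hI.false ⟨(Y, ν), hY, h1, h3⟩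
    rw [this]; simp
  set M : ℝ := n / c
  have hM : 0 ≤ M := by positivity
  have hlip : ∀ (p : I) x y, aff i s p.1 x ≤ aff i s p.1 y + M * dist x y := by
    intro p x y
    have h1 := aff_sub i s p.1 x y
    have h2 := sum_bound p.2.2.1 hc p.2.2.2 x y
    rw [abs_le] at h2
    linarith [h2.1]
  have habove : ∀ (p : I) (Y : E (n + 1)), Y ∈ L → s * Y i ≤ aff i s p.1 (prj i Y) :=
    fun p Y hY => patch_key hs p.2.2.1 (hc.trans_le p.2.2.2) hY
  have hbdd : ∀ x, BddBelow (range fun p : I => aff i s p.1 x) := by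
    intro x
    obtain ⟨p0⟩ := hI
    refine ⟨s * p0.1.1 i - M * dist (prj i p0.1.1) x, ?_⟩
    rintro _ ⟨p, rfl⟩
    have h1 := hlip p (prj i p0.1.1) x
    have h2 := habove p p0.1.1 p0.2.1
    show _ ≤ aff i s p.1 x
    linarith
  let φ : (Fin n → ℝ) → ℝ := fun x => ⨅ p : I, aff i s p.1 x
  have hφ : LipschitzWith M.toNNReal φ := by
    apply LipschitzWith.of_le_add_mul
    intro x y
    rw [Real.coe_toNNReal _ hM]
    rw [← sub_le_iff_le_add]
    refine le_ciInf fun p => ?_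
    rw [sub_le_iff_le_add]
    exact (ciInf_le (hbdd x) p).trans (hlip p x y)
  have hae : ∀ᵐ x ∂(volume : Measure (Fin n → ℝ)), DifferentiableAt ℝ φ x :=
    hφ.ae_differentiableAt
  have hsub : S ⊆ S ∩ prj i ⁻¹' {x | ¬ DifferentiableAt ℝ φ x} := by
    rintro Y hYS
    refine ⟨hYS, fun hd => ?_⟩
    obtain ⟨hY, ν, ν', h1, h2, h3, h4, h5⟩ := hYS
    have hval : ∀ μ, IsOuterNormalAt L μ Y → c ≤ s * μ i →
        fderiv ℝ φ (prj i Y) = affLin i s μ := by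
      intro μ hμ hcμ
      let p : I := ⟨(Y, μ), hY, hμ, hcμ⟩
      have e1 : aff i s p.1 (prj i Y) = s * Y i := by simp [aff, p]
      have e2 : φ (prj i Y) = s * Y i := by
        apply le_antisymm
        · rw [← e1]; exact ciInf_le (hbdd _) p
        · exact le_ciInf fun p' => habove p' Y hY
      have hmin : IsLocalMin (fun x => aff i s p.1 x - φ x) (prj i Y) := by
        refine Filter.Eventually.of_forall fun x => ?_
        show aff i s p.1 (prj i Y) - φ (prj i Y) ≤ aff i s p.1 x - φ x
        rw [e1, e2, sub_self]
        exact sub_nonneg.2 (ciInf_le (hbdd x) p)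
      have := hmin.hasFDerivAt_eq_zero ((aff_hasFDerivAt i s p.1 _).sub hd.hasFDerivAt)
      exact (sub_eq_zero.1 this).symm
    exact h5 (unique_of_same_lin hs h1.1 h2.1 (hc.trans_le h3) (hc.trans_le h4)
      ((hval ν h1 h3).symm.trans (hval ν' h2 h4)))
  have h := patch_measure hs hc hSp {x | ¬ DifferentiableAt ℝ φ x}
  rw [show volume {x | ¬ DifferentiableAt ℝ φ x} = 0 from hae, mul_zero] at h
  exact le_antisymm ((measure_mono hsub).trans h) zero_le

lemma ae_unique_normal {L : Set (E (n + 1))} (hL : IsClosed L)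
    (hi : (interior L).Nonempty) :
    ∀ᵐ Y ∂(μH[(n : ℝ)]).restrict (frontier L), ∀ ν ν', IsOuterNormalAt L ν Y →
      IsOuterNormalAt L ν' Y → ν = ν' := by
  let S : Fin (n + 1) → ℝ → ℕ → Set (E (n + 1)) := fun i s k =>
    {Y | Y ∈ L ∧ ∃ ν ν', IsOuterNormalAt L ν Y ∧ IsOuterNormalAt L ν' Y ∧
      1 / ((k : ℝ) + 1) ≤ s * ν i ∧ 1 / ((k : ℝ) + 1) ≤ s * ν' i ∧ ν ≠ ν'}
  have hnull : μH[(n : ℝ)] (⋃ i, ⋃ k, (S i 1 k ∪ S i (-1) k)) = 0 := by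
    rw [measure_iUnion_null_iff]; intro i
    rw [measure_iUnion_null_iff]; intro k
    refine measure_union_null ?_ ?_
    · exact null_two_normals (by norm_num) (by positivity)
    · exact null_two_normals (by norm_num) (by positivity)
  rw [ae_restrict_iff' isClosed_frontier.measurableSet]
  have hae : ∀ᵐ Y ∂(μH[(n : ℝ)] : Measure (E (n + 1))), Y ∉ (⋃ i, ⋃ k, (S i 1 k ∪ S i (-1) k)) :=
    measure_eq_zero_iff_ae_notMem.1 hnull
  filter_upwards [hae] with Y hYS hYf ν ν' hν hν'
  by_contra hne
  apply hYS
  have hYL := hL.frontier_subset hYf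
  obtain ⟨a, ha⟩ := hi
  -- the two normals are not opposite
  have hsum : ν + ν' ≠ 0 := by
    intro h0
    have hν'e : ν' = -ν := (neg_eq_of_add_eq_zero_right h0).symm
    have hplane : ∀ x ∈ L, (⟪x, ν⟫ : ℝ) = ⟪Y, ν⟫ := by
      intro x hx
      have h1 := hν.2 x hx
      have h2 := hν'.2 x hx
      rw [hν'e, inner_neg_right, inner_neg_right] at h2
      linarith
    obtain ⟨r, hr, hball⟩ := Metric.isOpen_iff.1 isOpen_interior a ha
    have hm : a + (r / 2) • ν ∈ L := by
      apply interior_subset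
      apply hball
      rw [mem_ball, dist_eq_norm, add_sub_cancel_left, norm_smul, hν.1, Real.norm_eq_abs,
        abs_of_pos (by positivity)]
      linarith
    have h1 := hplane _ hm
    have h2 := hplane _ (interior_subset ha)
    rw [inner_add_left, inner_smul_left, real_inner_self_eq_norm_sq, hν.1, h2] at h1
    simp at h1
    linarith
  have hpos : 0 < ‖ν + ν'‖ := norm_pos_iff.2 hsum
  set μ := ‖ν + ν'‖⁻¹ • (ν + ν') with hμd
  have hμ : IsOuterNormalAt L μ Y := by
    refine ⟨?_, fun x hx => ?_⟩
    · rw [hμd, norm_smul, norm_inv, norm_norm, inv_mul_cancel₀ hpos.ne']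
    · rw [hμd, inner_smul_right, inner_smul_right, inner_add_right, inner_add_right]
      have h1 := hν.2 x hx
      have h2 := hν'.2 x hx
      gcongr
  have hnegone : (⟪ν, ν'⟫ : ℝ) ≠ -1 := by
    intro h
    have : ‖ν + ν'‖ ^ 2 = 0 := by
      rw [norm_add_sq_real, h, hν.1, hν'.1]; norm_num
    exact hpos.ne' (by simpa using this)
  have hge : (-1 : ℝ) ≤ ⟪ν, ν'⟫ := by
    have := abs_real_inner_le_norm ν ν'
    rw [hν.1, hν'.1, mul_one] at this
    exact (abs_le.1 this).1
  have hgt : (-1 : ℝ) < ⟪ν, ν'⟫ := lt_of_le_of_ne hge (Ne.symm hnegone)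
  have hin : (0 : ℝ) < ⟪ν, μ⟫ := by
    rw [hμd, inner_smul_right, inner_add_right, real_inner_self_eq_norm_sq, hν.1]
    have : (0 : ℝ) < 1 ^ 2 + ⟪ν, ν'⟫ := by linarith
    positivity
  have hμne : ν ≠ μ := by
    intro h
    have h1 : (⟪ν, ν'⟫ : ℝ) = ‖ν + ν'‖ - 1 := by
      have : (⟪ν, μ⟫ : ℝ) = 1 := by rw [← h, real_inner_self_eq_norm_sq, hν.1]; norm_num
      rw [hμd, inner_smul_right, inner_add_right, real_inner_self_eq_norm_sq, hν.1] at this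
      rw [inv_mul_eq_iff_eq_mul₀ hpos.ne'] at this
      linarith
    have h2 : ‖ν + ν'‖ ^ 2 = 2 + 2 * ⟪ν, ν'⟫ := by
      rw [norm_add_sq_real, hν.1, hν'.1]; ring
    have h3 : ‖ν + ν'‖ = 2 := by
      rw [h1] at h2
      have : ‖ν + ν'‖ * (‖ν + ν'‖ - 2) = 0 := by linarith
      rcases mul_eq_zero.1 this with h | h
      · exact absurd h hpos.ne'
      · linarith
    have h4 : (⟪ν, ν'⟫ : ℝ) = 1 := by rw [h1, h3]; norm_num
    exact hne ((inner_eq_one_iff_of_norm_eq_one hν.1 hν'.1).1 h4)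
  have hex : ∃ i, 0 < ν i * μ i := by
    by_contra! hcon
    have : (⟪ν, μ⟫ : ℝ) ≤ 0 := by
      rw [PiLp.inner_apply]
      refine Finset.sum_nonpos fun i _ => ?_
      simpa [mul_comm] using hcon i
    linarith
  obtain ⟨i, hi⟩ := hex
  have hfin : ∀ s : ℝ, 0 < s * ν i → 0 < s * μ i → ∃ k, Y ∈ S i s k := by
    intro s h1 h2
    obtain ⟨k, hk⟩ := exists_nat_one_div_lt (lt_min h1 h2)
    exact ⟨k, hYL, ν, μ, hν, hμ, (hk.le.trans (min_le_left _ _)), (hk.le.trans (min_le_right _ _)),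
      hμne⟩
  rcases pos_and_pos_or_neg_and_neg_of_mul_pos hi with ⟨h1, h2⟩ | ⟨h1, h2⟩
  · obtain ⟨k, hk⟩ := hfin 1 (by simpa using h1) (by simpa using h2)
    exact mem_iUnion.2 ⟨i, mem_iUnion.2 ⟨k, Or.inl hk⟩⟩
  · obtain ⟨k, hk⟩ := hfin (-1) (by simpa using h1) (by simpa using h2)
    exact mem_iUnion.2 ⟨i, mem_iUnion.2 ⟨k, Or.inr hk⟩⟩

/-- Two-sided closeness of sets. -/
def Close {d : ℕ} (δ : ℝ) (A B : Set (E d)) : Prop :=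
  (∀ a ∈ A, ∃ b ∈ B, dist a b ≤ δ) ∧ (∀ b ∈ B, ∃ a ∈ A, dist b a ≤ δ)

lemma close_eventually {d : ℕ} {K : Set (E d)} {Km : ℕ → Set (E d)} (hK : IsCompact K)
    (hKn : K.Nonempty) (hKm : ∀ m, IsCompact (Km m) ∧ (Km m).Nonempty)
    (hconv : Tendsto (fun m => hausdorffDist (Km m) K) atTop (𝓝 0)) {δ : ℝ} (hδ : 0 < δ) :
    ∀ᶠ m in atTop, Close δ (Km m) K := by
  filter_upwards [hconv.eventually_lt_const hδ] with m hm
  have hfin : hausdorffEDist (Km m) K ≠ ⊤ :=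
    hausdorffEDist_ne_top_of_nonempty_of_bounded (hKm m).2 hKn (hKm m).1.isBounded hK.isBounded
  constructor
  · intro a ha
    obtain ⟨b, hb, h⟩ := exists_dist_lt_of_hausdorffDist_lt ha hm hfin
    exact ⟨b, hb, h.le⟩
  · intro b hb
    obtain ⟨a, ha, h⟩ := exists_dist_lt_of_hausdorffDist_lt' hb hm hfin
    exact ⟨a, ha, by rw [dist_comm]; exact h.le⟩

lemma Close.ball {d : ℕ} {K L : Set (E d)} {δ ρ : ℝ} {p : E d} (h : Close δ L K)
    (hc : Convex ℝ L) (hcl : IsClosed L) (hρ : 0 < ρ) (hδ : δ ≤ ρ / 2)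
    (hp : closedBall p ρ ⊆ K) : closedBall p (ρ / 2) ⊆ L := by
  intro Z hZ
  refine mem_of_closedBall hc hcl (r := ρ / 2) (by positivity) hδ h.2 ?_
  intro X hX
  apply hp
  rw [mem_closedBall] at *
  linarith [dist_triangle X Z p]

lemma hom_apply {d : ℕ} (p X : E d) (c : ℝ) :
    AffineMap.homothety p c X = p + c • (X - p) := by
  rw [AffineMap.homothety_apply, vsub_eq_sub, vadd_eq_add, add_comm]

lemma Close.shrink {d : ℕ} {K L : Set (E d)} {δ ρ ε : ℝ} {p : E d} (h : Close δ L K)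
    (hc : Convex ℝ L) (hcl : IsClosed L) (hKc : Convex ℝ K) (hρ : 0 < ρ) (hε : 0 < ε) (hε1 : ε < 1)
    (hδ : δ ≤ ε * ρ)
    (hp : closedBall p ρ ⊆ K) : AffineMap.homothety p (1 - ε) '' K ⊆ L := by
  rintro _ ⟨k, hk, rfl⟩
  refine mem_of_closedBall hc hcl (r := ε * ρ) (by positivity) hδ h.2 ?_
  intro X hX
  rw [mem_closedBall, dist_eq_norm, hom_apply] at hX
  have hq : p + ε⁻¹ • (X - (p + (1 - ε) • (k - p))) ∈ K := by
    apply hp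
    rw [mem_closedBall, dist_eq_norm, add_sub_cancel_left, norm_smul, norm_inv, Real.norm_eq_abs,
      abs_of_pos hε, inv_mul_le_iff₀ hε]
    exact hX
  have := hKc hk hq (show 0 ≤ 1 - ε by linarith) hε.le (by ring)
  convert this using 1
  rw [smul_add ε, smul_smul, mul_inv_cancel₀ hε.ne']
  module

lemma Close.grow {d : ℕ} {K L : Set (E d)} {δ ρ ε : ℝ} {p : E d} (h : Close δ L K)
    (hKc : Convex ℝ K) (hε : 0 < ε)
    (hδ : δ ≤ ε * ρ)
    (hp : closedBall p ρ ⊆ K) : L ⊆ AffineMap.homothety p (1 + ε) '' K := by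
  intro y hy
  obtain ⟨k, hk, hd⟩ := h.1 y hy
  have h1 : (1 + ε) ≠ 0 := by positivity
  have hq : p + ε⁻¹ • (y - k) ∈ K := by
    apply hp
    rw [mem_closedBall, dist_eq_norm, add_sub_cancel_left, norm_smul, norm_inv, Real.norm_eq_abs,
      abs_of_pos hε, inv_mul_le_iff₀ hε, ← dist_eq_norm]
    exact hd.trans hδ
  refine ⟨_, hKc hk hq (a := 1 / (1 + ε)) (b := ε / (1 + ε)) (by positivity) (by positivity)
    (by field_simp), ?_⟩
  rw [hom_apply]
  have e1 : (1 + ε) * (1 / (1 + ε)) = 1 := by field_simp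
  have e2 : (1 + ε) * (ε / (1 + ε)) = ε := by field_simp
  rw [smul_sub, smul_add (1 + ε), smul_smul, smul_smul, e1, e2, smul_add ε, smul_smul,
    mul_inv_cancel₀ hε.ne']
  module

/-- Homothety as a homeomorphism. -/
def homHomeo {d : ℕ} (p : E d) (c : ℝ) (hc : c ≠ 0) : E d ≃ₜ E d :=
  (Homeomorph.subRight p).trans ((Homeomorph.smulOfNeZero c hc).trans (Homeomorph.addLeft p))

lemma homHomeo_coe {d : ℕ} (p : E d) (c : ℝ) (hc : c ≠ 0) :
    (homHomeo p c hc : E d → E d) = AffineMap.homothety p c := by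
  funext X
  rw [hom_apply]
  rfl

lemma hom_frontier {d : ℕ} (p : E d) {c : ℝ} (hc : c ≠ 0) (K : Set (E d)) :
    frontier (AffineMap.homothety p c '' K) = AffineMap.homothety p c '' frontier K := by
  rw [← homHomeo_coe p c hc, ← Homeomorph.image_frontier]

lemma hom_interior {d : ℕ} (p : E d) {c : ℝ} (hc : c ≠ 0) (K : Set (E d)) :
    interior (AffineMap.homothety p c '' K) = AffineMap.homothety p c '' interior K := by
  rw [← homHomeo_coe p c hc, ← Homeomorph.image_interior]

lemma hom_closed {d : ℕ} (p : E d) {c : ℝ} (hc : c ≠ 0) {K : Set (E d)} (hK : IsClosed K) :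
    IsClosed (AffineMap.homothety p c '' K) := by
  rw [← homHomeo_coe p c hc]
  exact (Homeomorph.isClosed_image _).2 hK

lemma hom_convex {d : ℕ} (p : E d) (c : ℝ) {K : Set (E d)} (hK : Convex ℝ K) :
    Convex ℝ (AffineMap.homothety p c '' K) := hK.affine_image _

lemma hom_dist {d : ℕ} (p X : E d) (c : ℝ) :
    dist (AffineMap.homothety p c X) X = |c - 1| * dist X p := by
  rw [hom_apply, dist_eq_norm, dist_eq_norm, ← Real.norm_eq_abs, ← norm_smul]
  congr 1
  module

lemma nnnorm_rpow_eq {t : ℝ} (ht : 0 ≤ t) :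
    ((‖t‖₊ ^ (n : ℝ) : ℝ≥0) : ℝ≥0∞) = ENNReal.ofReal t ^ (n : ℝ) := by
  rw [ENNReal.coe_rpow_of_nonneg _ (Nat.cast_nonneg n), ← Real.enorm_eq_ofReal ht]
  rfl

lemma total_upper {K L : Set (E (n + 1))} {δ ρ ε R : ℝ} {p : E (n + 1)} (h : Close δ L K)
    (hc : Convex ℝ L) (hcl : IsClosed L) (hKc : Convex ℝ K) (hKcl : IsClosed K)
    (hLi : (interior L).Nonempty) (hε : 0 < ε) (hδ : δ ≤ ε * ρ)
    (hp : closedBall p ρ ⊆ K) (hR : K ⊆ closedBall p R) :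
    μH[(n : ℝ)] (frontier L) ≤ ENNReal.ofReal (1 + ε) ^ (n : ℝ) * μH[(n : ℝ)] (frontier K) := by
  have h1 : (1 + ε) ≠ 0 := by positivity
  have hx : ∀ x ∈ AffineMap.homothety p (1 + ε) '' K, ∃ c ∈ L, dist x c ≤ ε * R + δ := by
    rintro _ ⟨k, hk, rfl⟩
    obtain ⟨a, ha, hd⟩ := h.2 k hk
    refine ⟨a, ha, (dist_triangle _ k _).trans (add_le_add ?_ hd)⟩
    rw [hom_dist, add_sub_cancel_left, abs_of_pos hε]
    exact mul_le_mul_of_nonneg_left (hR hk) hε.le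
  refine (hausdorff_mono hcl hc hLi (hom_closed p h1 hKcl) (h.grow hKc hε hδ hp) hx le_rfl
    (Nat.cast_nonneg n)).trans ?_
  refine (measure_mono inter_subset_left).trans ?_
  rw [hom_frontier p h1, hausdorffMeasure_homothety_image (Nat.cast_nonneg n) p h1]
  rw [ENNReal.smul_def, smul_eq_mul]
  refine le_of_eq ?_
  congr 1
  exact nnnorm_rpow_eq (by positivity)

lemma local_lower {K L : Set (E (n + 1))} {δ ρ ε R : ℝ} {p : E (n + 1)} (h : Close δ L K)
    (hc : Convex ℝ L) (hcl : IsClosed L) (hKc : Convex ℝ K) (hKcl : IsClosed K)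
    (hKi : (interior K).Nonempty) (hρ : 0 < ρ) (hε : 0 < ε) (hε1 : ε < 1) (hδ : δ ≤ ε * ρ)
    (hp : closedBall p ρ ⊆ K) (hR : K ⊆ closedBall p R) {A U : Set (E (n + 1))}
    (hA : A ⊆ frontier K) {η : ℝ} (hη : δ + ε * R + ε * R ≤ η)
    (hU : ∀ X ∈ A, closedBall X η ⊆ U) :
    ENNReal.ofReal (1 - ε) ^ (n : ℝ) * μH[(n : ℝ)] A ≤ μH[(n : ℝ)] (frontier L ∩ U) := by
  have h1 : (1 - ε) ≠ 0 := by linarith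
  have hdist : ∀ k ∈ K, dist (AffineMap.homothety p (1 - ε) k) k ≤ ε * R := by
    intro k hk
    rw [hom_dist, show 1 - ε - 1 = -ε by ring, abs_neg, abs_of_pos hε]
    exact mul_le_mul_of_nonneg_left (hR hk) hε.le
  have hx : ∀ x ∈ L, ∃ c ∈ AffineMap.homothety p (1 - ε) '' K, dist x c ≤ δ + ε * R := by
    intro x hx
    obtain ⟨k, hk, hd⟩ := h.1 x hx
    refine ⟨_, ⟨k, hk, rfl⟩, (dist_triangle _ k _).trans (add_le_add hd ?_)⟩
    rw [dist_comm]
    exact hdist k hk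
  have hAf : AffineMap.homothety p (1 - ε) '' A ⊆ frontier (AffineMap.homothety p (1 - ε) '' K) := by
    rw [hom_frontier p h1]; exact image_mono hA
  have hm := hausdorff_mono (hom_closed p h1 hKcl) (hom_convex p _ hKc)
    (by rw [hom_interior p h1]; exact hKi.image _) hcl
    (h.shrink hc hcl hKc hρ hε hε1 hδ hp) hx hAf (Nat.cast_nonneg (α := ℝ) n)
  rw [hausdorffMeasure_homothety_image (Nat.cast_nonneg n) p h1, ENNReal.smul_def,
    smul_eq_mul] at hm
  refine le_trans (le_of_eq ?_) (hm.trans (measure_mono ?_))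
  · congr 1
    exact (nnnorm_rpow_eq (by linarith)).symm
  · rintro X ⟨hXL, _, ⟨Z, hZ, rfl⟩, hd⟩
    refine ⟨hXL, hU Z hZ ?_⟩
    rw [mem_closedBall]
    have := hdist Z (hKcl.frontier_subset (hA hZ))
    linarith [dist_triangle X (AffineMap.homothety p (1 - ε) Z) Z]

/-- The standing assumptions. -/
structure Setup (K : Set (E (n + 1))) (Km : ℕ → Set (E (n + 1))) : Prop where
  hK : IsCompact K
  hKc : Convex ℝ K
  hKi : (interior K).Nonempty
  hKm : ∀ m, IsCompact (Km m) ∧ Convex ℝ (Km m) ∧ (Km m).Nonempty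
  hconv : Tendsto (fun m => hausdorffDist (Km m) K) atTop (𝓝 0)

lemma Setup.close {K : Set (E (n + 1))} {Km : ℕ → Set (E (n + 1))} (S : Setup K Km) {δ : ℝ}
    (hδ : 0 < δ) : ∀ᶠ m in atTop, Close δ (Km m) K :=
  close_eventually S.hK (S.hKi.mono interior_subset) (fun m => ⟨(S.hKm m).1, (S.hKm m).2.2⟩)
    S.hconv hδ

lemma exists_balls {d : ℕ} {K : Set (E d)} (hK : IsCompact K) {p : E d} (hp : p ∈ interior K) :
    ∃ ρ R : ℝ, 0 < ρ ∧ 0 < R ∧ closedBall p ρ ⊆ K ∧ K ⊆ closedBall p R := by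
  obtain ⟨ρ, hρ, h⟩ := Metric.nhds_basis_closedBall.mem_iff.1 (mem_interior_iff_mem_nhds.1 hp)
  obtain ⟨R, hR⟩ := hK.isBounded.subset_closedBall p
  exact ⟨ρ, max R 1, hρ, by positivity, h, hR.trans (closedBall_subset_closedBall (le_max_left _ _))⟩

lemma Setup.balls {K : Set (E (n + 1))} {Km : ℕ → Set (E (n + 1))} (S : Setup K Km)
    {p : E (n + 1)} (hp : p ∈ interior K) : ∃ ρ R : ℝ, 0 < ρ ∧ 0 < R ∧ closedBall p ρ ⊆ K ∧
      K ⊆ closedBall p R ∧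
      ∀ᶠ m in atTop, closedBall p ρ ⊆ Km m ∧ Km m ⊆ closedBall p R := by
  obtain ⟨ρ, R, hρ, hR, h1, h2⟩ := exists_balls S.hK hp
  refine ⟨ρ / 2, R + ρ, by positivity, by positivity,
    (closedBall_subset_closedBall (by linarith)).trans h1,
    h2.trans (closedBall_subset_closedBall (by linarith)), ?_⟩
  filter_upwards [S.close (half_pos hρ)] with m hm
  refine ⟨hm.ball (S.hKm m).2.1 (S.hKm m).1.isClosed hρ le_rfl h1, fun X hX => ?_⟩
  obtain ⟨b, hb, hd⟩ := hm.1 X hX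
  have := h2 hb
  rw [mem_closedBall] at *
  linarith [dist_triangle X b p]

lemma Setup.int {K : Set (E (n + 1))} {Km : ℕ → Set (E (n + 1))} (S : Setup K Km) :
    ∀ᶠ m in atTop, (interior (Km m)).Nonempty := by
  obtain ⟨p, hp⟩ := S.hKi
  obtain ⟨ρ, R, hρ, hR, h1, h2, h3⟩ := S.balls hp
  filter_upwards [h3] with m hm
  exact ⟨p, mem_interior_iff_mem_nhds.2 (mem_of_superset (closedBall_mem_nhds p hρ) hm.1)⟩

/-- Surface measure. -/
abbrev sig (L : Set (E (n + 1))) : Measure (E (n + 1)) := (μH[(n : ℝ)]).restrict (frontier L)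

lemma sig_finite {L : Set (E (n + 1))} (hL : IsCompact L) (hc : Convex ℝ L)
    (hi : (interior L).Nonempty) : IsFiniteMeasure (sig L) :=
  ⟨by rw [Measure.restrict_apply_univ]; exact frontier_finite hL hc hi⟩

lemma tendsto_pow_aux (c : ℝ≥0∞) (s : ℝ) :
    Tendsto (fun ε : ℝ => ENNReal.ofReal (1 + s * ε) ^ (n : ℝ) * c) (𝓝[>] 0) (𝓝 c) := by
  have h1 : Tendsto (fun ε : ℝ => ENNReal.ofReal (1 + s * ε)) (𝓝[>] 0) (𝓝 1) := by
    have : Tendsto (fun ε : ℝ => ENNReal.ofReal (1 + s * ε)) (𝓝 0) (𝓝 (ENNReal.ofReal (1 + s * 0))) :=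
      (ENNReal.continuous_ofReal.comp (by fun_prop)).tendsto 0
    simp only [mul_zero, add_zero, ENNReal.ofReal_one] at this
    exact this.mono_left nhdsWithin_le_nhds
  have h2 : Tendsto (fun ε : ℝ => ENNReal.ofReal (1 + s * ε) ^ (n : ℝ)) (𝓝[>] 0) (𝓝 1) := by
    have := (ENNReal.continuous_rpow_const (y := (n : ℝ))).tendsto 1
    rw [ENNReal.one_rpow] at this
    exact this.comp h1
  have := ENNReal.Tendsto.mul_const (b := c) h2 (Or.inl one_ne_zero)
  rwa [one_mul] at this

lemma Setup.liminf_piece {K : Set (E (n + 1))} {Km : ℕ → Set (E (n + 1))} (S : Setup K Km)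
    {A U : Set (E (n + 1))} (hA : A ⊆ frontier K) {η : ℝ} (hη : 0 < η)
    (hU : ∀ X ∈ A, closedBall X η ⊆ U) :
    μH[(n : ℝ)] A ≤ liminf (fun m => μH[(n : ℝ)] (frontier (Km m) ∩ U)) atTop := by
  obtain ⟨p, hp⟩ := S.hKi
  obtain ⟨ρ, R, hρ, hR, h1, h2⟩ := exists_balls S.hK hp
  refine le_of_tendsto (tendsto_pow_aux (n := n) (μH[(n : ℝ)] A) (-1)) ?_
  have hpos : ∀ᶠ ε : ℝ in 𝓝[>] 0, 0 < ε := self_mem_nhdsWithin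
  have hsm : ∀ᶠ ε : ℝ in 𝓝[>] 0, ε < min 1 (η / (ρ + R + R)) :=
    nhdsWithin_le_nhds (Iio_mem_nhds (by positivity))
  filter_upwards [hpos, hsm] with ε h0 hε
  have hε1 : ε < 1 := hε.trans_le (min_le_left _ _)
  have hε2 : ε * (ρ + R + R) < η := (lt_div_iff₀ (by positivity)).1 (hε.trans_le (min_le_right _ _))
  refine le_liminf_of_le (by isBoundedDefault) ?_
  filter_upwards [S.close (mul_pos h0 hρ)] with m hm
  have := local_lower hm (S.hKm m).2.1 (S.hKm m).1.isClosed S.hKc S.hK.isClosed S.hKi hρ h0 hε1 le_rfl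
    h1 h2 hA (η := η) (by linarith) hU
  rwa [neg_one_mul, ← sub_eq_add_neg]

lemma Setup.liminf_open {K : Set (E (n + 1))} {Km : ℕ → Set (E (n + 1))} (S : Setup K Km)
    (U : Set (E (n + 1))) (hU : IsOpen U) :
    sig K U ≤ liminf (fun m => sig (Km m) U) atTop := by
  simp only [sig, Measure.restrict_apply hU.measurableSet]
  set A : ℕ → Set (E (n + 1)) := fun j => frontier K ∩ {X | closedBall X (1 / ((j : ℝ) + 1)) ⊆ U}
    with hAdef
  have hmono : Monotone A := by
    intro i j hij X hX
    refine ⟨hX.1, (closedBall_subset_closedBall ?_).trans hX.2⟩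
    exact one_div_le_one_div_of_le (by positivity) (by exact_mod_cast Nat.succ_le_succ hij)
  have hun : U ∩ frontier K ⊆ ⋃ j, A j := by
    rintro X ⟨hX, hXf⟩
    obtain ⟨r, hr, hb⟩ := Metric.nhds_basis_closedBall.mem_iff.1 (hU.mem_nhds hX)
    obtain ⟨j, hj⟩ := exists_nat_one_div_lt hr
    exact mem_iUnion.2 ⟨j, hXf, (closedBall_subset_closedBall hj.le).trans hb⟩
  refine (measure_mono hun).trans ?_
  rw [hmono.measure_iUnion]
  refine iSup_le fun j => ?_
  have := S.liminf_piece (A := A j) (U := U) inter_subset_left (η := 1 / ((j : ℝ) + 1))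
    (by positivity) (fun X hX => hX.2)
  simpa only [inter_comm] using this

lemma Setup.limsup_total {K : Set (E (n + 1))} {Km : ℕ → Set (E (n + 1))} (S : Setup K Km) :
    limsup (fun m => sig (Km m) univ) atTop ≤ sig K univ := by
  simp only [sig, Measure.restrict_apply_univ]
  obtain ⟨p, hp⟩ := S.hKi
  obtain ⟨ρ, R, hρ, hR, h1, h2⟩ := exists_balls S.hK hp
  refine ge_of_tendsto (tendsto_pow_aux (n := n) (μH[(n : ℝ)] (frontier K)) 1) ?_
  have hpos : ∀ᶠ ε : ℝ in 𝓝[>] 0, 0 < ε := self_mem_nhdsWithin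
  filter_upwards [hpos] with ε h0
  refine limsup_le_of_le (by isBoundedDefault) ?_
  filter_upwards [S.close (mul_pos h0 hρ), S.int] with m hm hi
  rw [one_mul]
  exact total_upper hm (S.hKm m).2.1 (S.hKm m).1.isClosed S.hKc S.hK.isClosed hi h0 le_rfl h1 h2

lemma Setup.tendsto_total {K : Set (E (n + 1))} {Km : ℕ → Set (E (n + 1))} (S : Setup K Km) :
    Tendsto (fun m => (sig (Km m)).real univ) atTop (𝓝 ((sig K).real univ)) := by
  have ht := tendsto_of_le_liminf_of_limsup_le (S.liminf_open univ isOpen_univ) S.limsup_total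
  have := sig_finite S.hK S.hKc S.hKi
  exact (ENNReal.tendsto_toReal (measure_ne_top _ _)).comp ht

lemma lsc_real {Ω : Type*} [MeasurableSpace Ω] [TopologicalSpace Ω] [BorelSpace Ω]
    {μ : Measure Ω} {μs : ℕ → Measure Ω} [IsFiniteMeasure μ]
    (hfin : ∀ᶠ m in atTop, IsFiniteMeasure (μs m))
    (h_opens : ∀ G, IsOpen G → μ G ≤ atTop.liminf (fun i ↦ μs i G))
    {F : Ω → ℝ} (hF : Continuous F) (h0 : ∀ x, 0 ≤ F x) {M : ℝ} (hM : ∀ x, F x ≤ M)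
    {ε : ℝ} (hε : 0 < ε) : ∀ᶠ m in atTop, ∫ x, F x ∂μ - ε < ∫ x, F x ∂(μs m) := by
  have key := lintegral_le_liminf_lintegral_of_forall_isOpen_measure_le_liminf_measure hF h0 h_opens
  have hInteg : ∀ ν : Measure Ω, IsFiniteMeasure ν → Integrable F ν := fun ν _ =>
    Integrable.of_bound hF.measurable.aestronglyMeasurable M
      (Eventually.of_forall fun x => by rw [Real.norm_eq_abs, abs_of_nonneg (h0 x)]; exact hM x)
  have heq : ∀ ν : Measure Ω, IsFiniteMeasure ν →
      ∫⁻ x, ENNReal.ofReal (F x) ∂ν = ENNReal.ofReal (∫ x, F x ∂ν) := fun ν hν =>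
    (ofReal_integral_eq_lintegral_ofReal (hInteg ν hν) (Eventually.of_forall h0)).symm
  by_cases hpos : 0 < ∫ x, F x ∂μ
  · have hlt : ENNReal.ofReal (∫ x, F x ∂μ - ε) <
        atTop.liminf (fun i ↦ ∫⁻ x, ENNReal.ofReal (F x) ∂(μs i)) := by
      refine lt_of_lt_of_le ?_ key
      rw [heq μ inferInstance]
      exact (ENNReal.ofReal_lt_ofReal_iff hpos).2 (by linarith)
    filter_upwards [eventually_lt_of_lt_liminf hlt, hfin] with m hm hf
    rw [heq _ hf] at hm
    exact lt_of_not_ge fun h => not_le.2 hm (ENNReal.ofReal_le_ofReal h)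
  · filter_upwards with m
    have : 0 ≤ ∫ x, F x ∂(μs m) := integral_nonneg h0
    linarith

lemma weak_of_open {Ω : Type*} [MeasurableSpace Ω] [TopologicalSpace Ω] [BorelSpace Ω]
    {μ : Measure Ω} {μs : ℕ → Measure Ω} [IsFiniteMeasure μ]
    (hfin : ∀ᶠ m in atTop, IsFiniteMeasure (μs m))
    (h_opens : ∀ G, IsOpen G → μ G ≤ atTop.liminf (fun i ↦ μs i G))
    (htot : Tendsto (fun m => (μs m).real univ) atTop (𝓝 (μ.real univ)))
    {g : Ω → ℝ} (hg : Continuous g) {B : ℝ} (hB : ∀ x, |g x| ≤ B) :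
    Tendsto (fun m => ∫ x, g x ∂(μs m)) atTop (𝓝 (∫ x, g x ∂μ)) := by
  have hInteg : ∀ ν : Measure Ω, IsFiniteMeasure ν → Integrable g ν := fun ν _ =>
    Integrable.of_bound hg.measurable.aestronglyMeasurable B (Eventually.of_forall hB)
  have e1 : ∀ ν : Measure Ω, IsFiniteMeasure ν →
      ∫ x, (g x + B) ∂ν = ∫ x, g x ∂ν + B * ν.real univ := fun ν hν => by
    rw [integral_add (hInteg ν hν) (integrable_const _), integral_const, smul_eq_mul, mul_comm B]
  have e2 : ∀ ν : Measure Ω, IsFiniteMeasure ν →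
      ∫ x, (B - g x) ∂ν = B * ν.real univ - ∫ x, g x ∂ν := fun ν hν => by
    rw [integral_sub (integrable_const _) (hInteg ν hν), integral_const, smul_eq_mul, mul_comm B]
  rw [Metric.tendsto_atTop']
  intro ε hε
  have a1 := lsc_real hfin h_opens (F := fun x => g x + B) (by fun_prop)
    (fun x => by linarith [(abs_le.1 (hB x)).1]) (M := 2 * B)
    (fun x => by linarith [(abs_le.1 (hB x)).2]) (half_pos hε)
  have a2 := lsc_real hfin h_opens (F := fun x => B - g x) (by fun_prop)
    (fun x => by linarith [(abs_le.1 (hB x)).2]) (M := 2 * B)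
    (fun x => by linarith [(abs_le.1 (hB x)).1]) (half_pos hε)
  have a3 := (Metric.tendsto_nhds.1 (htot.const_mul B)) (ε / 2) (half_pos hε)
  have : ∀ᶠ m in atTop, dist (∫ x, g x ∂(μs m)) (∫ x, g x ∂μ) < ε := by
    filter_upwards [a1, a2, a3, hfin] with m h1 h2 h3 hf
    rw [e1 _ hf, e1 _ inferInstance] at h1
    rw [e2 _ hf, e2 _ inferInstance] at h2
    rw [Real.dist_eq, abs_lt] at *
    constructor <;> linarith
  obtain ⟨M, hM⟩ := eventually_atTop.1 this
  exact ⟨M, fun m hm => hM m hm.le⟩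

lemma Setup.weak {K : Set (E (n + 1))} {Km : ℕ → Set (E (n + 1))} (S : Setup K Km)
    {g : E (n + 1) → ℝ} (hg : Continuous g) :
    Tendsto (fun m => ∫ x, g x ∂(sig (Km m))) atTop (𝓝 (∫ x, g x ∂(sig K))) := by
  obtain ⟨p, hp⟩ := S.hKi
  obtain ⟨ρ, R, hρ, hR, h1, h2, h3⟩ := S.balls hp
  obtain ⟨B, hB⟩ := (isCompact_closedBall p R).exists_bound_of_continuousOn hg.continuousOn
  have := sig_finite S.hK S.hKc S.hKi
  have hfin : ∀ᶠ m in atTop, IsFiniteMeasure (sig (Km m)) := by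
    filter_upwards [S.int] with m hm using sig_finite (S.hKm m).1 (S.hKm m).2.1 hm
  have hB0 : 0 ≤ B := (norm_nonneg _).trans (hB p (mem_closedBall_self hR.le))
  set g' : E (n + 1) → ℝ := fun x => max (-B) (min (g x) B) with hg'
  have hw := weak_of_open (μ := sig K) (μs := fun m => sig (Km m)) hfin S.liminf_open S.tendsto_total
    (g := g') (by fun_prop) (B := B) (fun x => abs_le.2 ⟨le_max_left _ _,
      max_le (by linarith) (min_le_right _ _)⟩)
  have heq : ∀ L : Set (E (n + 1)), IsCompact L → L ⊆ closedBall p R →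
      ∫ x, g' x ∂(sig L) = ∫ x, g x ∂(sig L) := by
    intro L hL hLR
    refine setIntegral_congr_fun isClosed_frontier.measurableSet fun x hx => ?_
    have := abs_le.1 (hB x (hLR (hL.isClosed.frontier_subset hx)))
    simp only [hg', min_eq_left this.2, max_eq_right this.1]
  rw [heq K S.hK h2] at hw
  refine hw.congr' ?_
  filter_upwards [h3] with m hm using heq _ (S.hKm m).1 hm.2

/-- Support function (real supremum). -/
def hs (K : Set (E (n + 1))) (ν : E (n + 1)) : ℝ := sSup ((fun Y => (⟪Y, ν⟫ : ℝ)) '' K)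

lemma hs_continuous {K : Set (E (n + 1))} (hK : IsCompact K) : Continuous (hs K) :=
  hK.continuous_sSup (f := fun ν Y => (⟪Y, ν⟫ : ℝ)) (by
    show Continuous fun q : E (n + 1) × E (n + 1) => (⟪q.2, q.1⟫ : ℝ)
    fun_prop)

lemma le_hs {K : Set (E (n + 1))} (hK : IsCompact K) {Y ν : E (n + 1)} (hY : Y ∈ K) :
    (⟪Y, ν⟫ : ℝ) ≤ hs K ν :=
  le_csSup (hK.bddAbove_image (by fun_prop)) (mem_image_of_mem _ hY)

lemma hs_normal {K : Set (E (n + 1))} (hK : IsCompact K) {Y ν : E (n + 1)} (hY : Y ∈ K)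
    (h : IsOuterNormalAt K ν Y) : hs K ν = ⟪Y, ν⟫ := by
  refine le_antisymm (csSup_le ⟨_, mem_image_of_mem _ hY⟩ ?_) (le_hs hK hY)
  rintro _ ⟨x, hx, rfl⟩
  exact h.2 x hx

/-- Continuous upper approximations of `f` composed with the Gauss map. -/
def Phi (K : Set (E (n + 1))) (f : E (n + 1) → ℝ) (k : ℝ) (X : E (n + 1)) : ℝ :=
  sSup ((fun ν => f ν - k * (hs K ν - ⟪X, ν⟫)) '' sphere (0 : E (n + 1)) 1)

lemma Phi_continuous {K : Set (E (n + 1))} (hK : IsCompact K) {f : E (n + 1) → ℝ}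
    (hf : Continuous f) (k : ℝ) : Continuous (Phi K f k) :=
  (isCompact_sphere _ _).continuous_sSup (f := fun X ν => f ν - k * (hs K ν - ⟪X, ν⟫)) (by
    have := hs_continuous hK
    show Continuous fun q : E (n + 1) × E (n + 1) => f q.2 - k * (hs K q.2 - ⟪q.1, q.2⟫)
    fun_prop)

lemma le_Phi {K : Set (E (n + 1))} (hK : IsCompact K) {f : E (n + 1) → ℝ}
    (hf : Continuous f) (k : ℝ) (X : E (n + 1)) {ν : E (n + 1)} (hν : ‖ν‖ = 1) :
    f ν - k * (hs K ν - ⟪X, ν⟫) ≤ Phi K f k X := by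
  have := hs_continuous hK
  exact le_csSup ((isCompact_sphere _ _).bddAbove_image
    (Continuous.continuousOn (by fun_prop))) (mem_image_of_mem _ (by simpa using hν))

lemma Phi_le {K : Set (E (n + 1))} {f : E (n + 1) → ℝ}
    {k : ℝ} {X : E (n + 1)} {b : ℝ} (h : ∀ ν, ‖ν‖ = 1 → f ν - k * (hs K ν - ⟪X, ν⟫) ≤ b) :
    Phi K f k X ≤ b := by
  refine csSup_le ((NormedSpace.sphere_nonempty.2 zero_le_one).image _) ?_
  rintro _ ⟨ν, hν, rfl⟩
  exact h ν (by simpa using hν)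

lemma Phi_bound {K : Set (E (n + 1))} (hK : IsCompact K) {f : E (n + 1) → ℝ}
    (hf : Continuous f) {k : ℝ} (hk : 0 ≤ k) {X ν : E (n + 1)} (hX : X ∈ K)
    (hν : IsOuterNormalAt K ν X) {B : ℝ} (hB : ∀ ν, ‖ν‖ = 1 → |f ν| ≤ B) :
    |Phi K f k X| ≤ B := by
  rw [abs_le]
  constructor
  · have h1 := le_Phi hK hf k X hν.1
    rw [hs_normal hK hX hν, sub_self, mul_zero, sub_zero] at h1
    linarith [(abs_le.1 (hB ν hν.1)).1]
  · refine Phi_le fun μ hμ => ?_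
    have := mul_nonneg hk (sub_nonneg.2 (le_hs hK hX (ν := μ)))
    linarith [(abs_le.1 (hB μ hμ)).2]

lemma Phi_tendsto {K : Set (E (n + 1))} (hK : IsCompact K) {f : E (n + 1) → ℝ}
    (hf : Continuous f) {X ν : E (n + 1)} (hX : X ∈ K)
    (hν : IsOuterNormalAt K ν X) (hu : ∀ μ, IsOuterNormalAt K μ X → μ = ν) :
    Tendsto (fun k : ℕ => Phi K f k X) atTop (𝓝 (f ν)) := by
  obtain ⟨B, hB⟩ := (isCompact_sphere (0 : E (n + 1)) 1).exists_bound_of_continuousOn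
    hf.continuousOn
  replace hB : ∀ ν, ‖ν‖ = 1 → |f ν| ≤ B := fun ν h => hB ν (by simpa using h)
  have hlow : ∀ k : ℕ, f ν ≤ Phi K f k X := by
    intro k
    have h1 := le_Phi hK hf k X hν.1
    rwa [hs_normal hK hX hν, sub_self, mul_zero, sub_zero] at h1
  have hhc := hs_continuous hK
  rw [Metric.tendsto_atTop]
  intro ε hε
  set T : Set (E (n + 1)) := sphere 0 1 ∩ {μ | f ν + ε / 2 ≤ f μ} with hT
  have hTc : IsCompact T := (isCompact_sphere _ _).inter_right (isClosed_le (by fun_prop) hf)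
  have hd : ∃ d > 0, ∀ μ ∈ T, d ≤ hs K μ - ⟪X, μ⟫ := by
    rcases T.eq_empty_or_nonempty with h | h
    · exact ⟨1, one_pos, by simp [h]⟩
    · obtain ⟨μ, hμ, hmin⟩ := hTc.exists_isMinOn h
        (f := fun μ => hs K μ - ⟪X, μ⟫) (Continuous.continuousOn (by fun_prop))
      refine ⟨_, ?_, fun μ' h' => hmin h'⟩
      by_contra hle
      have he : hs K μ ≤ ⟪X, μ⟫ := by linarith
      have hn : IsOuterNormalAt K μ X :=
        ⟨by simpa using hμ.1, fun x hx => (le_hs hK hx).trans he⟩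
      have h2 := hμ.2
      rw [hu μ hn] at h2
      change f ν + ε / 2 ≤ f ν at h2
      linarith
  obtain ⟨d, hd0, hd⟩ := hd
  obtain ⟨k0, hk0⟩ := exists_nat_gt (2 * B / d)
  refine ⟨k0, fun k hk => ?_⟩
  rw [Real.dist_eq, abs_of_nonneg (sub_nonneg.2 (hlow k))]
  have : Phi K f k X ≤ f ν + ε / 2 := by
    refine Phi_le fun μ hμ => ?_
    by_cases hμT : f ν + ε / 2 ≤ f μ
    · have h1 := hd μ ⟨by simpa using hμ, hμT⟩
      have h2 : 2 * B < k0 * d := (div_lt_iff₀ hd0).1 hk0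
      have h3 : (k0 : ℝ) * d ≤ k * (hs K μ - ⟪X, μ⟫) := by
        have : (k0 : ℝ) ≤ k := by exact_mod_cast hk
        gcongr
      linarith [(abs_le.1 (hB μ hμ)).2, (abs_le.1 (hB ν hν.1)).1]
    · have := mul_nonneg (Nat.cast_nonneg (α := ℝ) k) (sub_nonneg.2 (le_hs hK hX (ν := μ)))
      linarith
  linarith

lemma sig_integrable {L : Set (E (n + 1))} (hL : IsCompact L) (hc : Convex ℝ L)
    (hi : (interior L).Nonempty) {g : E (n + 1) → ℝ} (hg : Measurable g) {B : ℝ}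
    (hB : ∀ x ∈ L, |g x| ≤ B) : Integrable g (sig L) := by
  have := sig_finite hL hc hi
  refine Integrable.of_bound hg.aestronglyMeasurable B ?_
  filter_upwards [ae_restrict_mem isClosed_frontier.measurableSet] with x hx
  exact hB x (hL.isClosed.frontier_subset hx)

lemma sig_integrable_cont {L : Set (E (n + 1))} (hL : IsCompact L) (hc : Convex ℝ L)
    (hi : (interior L).Nonempty) {g : E (n + 1) → ℝ} (hg : Continuous g) : Integrable g (sig L) := by
  obtain ⟨B, hB⟩ := hL.exists_bound_of_continuousOn hg.continuousOn
  exact sig_integrable hL hc hi hg.measurable hB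

lemma sig_integrable_N {L : Set (E (n + 1))} (hL : IsCompact L) (hc : Convex ℝ L)
    (hi : (interior L).Nonempty) {w f : E (n + 1) → ℝ} (hw : Continuous w) (hf : Continuous f)
    {N : E (n + 1) → E (n + 1)} (hN : Measurable N) (hN1 : ∀ X, ‖N X‖ = 1) :
    Integrable (fun X => w X * f (N X)) (sig L) := by
  obtain ⟨W, hW⟩ := hL.exists_bound_of_continuousOn hw.continuousOn
  obtain ⟨B, hB⟩ := (isCompact_sphere (0 : E (n + 1)) 1).exists_bound_of_continuousOn
    hf.continuousOn
  refine sig_integrable hL hc hi (hw.measurable.mul (hf.measurable.comp hN)) (B := W * B) ?_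
  intro x hx
  rw [abs_mul]
  have h1 := hW x hx
  exact mul_le_mul h1 (hB (N x) (by simpa using hN1 x)) (abs_nonneg _) ((norm_nonneg _).trans h1)

lemma Setup.upper {K : Set (E (n + 1))} {Km : ℕ → Set (E (n + 1))} (S : Setup K Km)
    {w f : E (n + 1) → ℝ} (hw : Continuous w) (hw0 : ∀ X, 0 ≤ w X) (hf : Continuous f)
    {Nm : ℕ → E (n + 1) → E (n + 1)} {N : E (n + 1) → E (n + 1)}
    (hNmmeas : ∀ m, Measurable (Nm m)) (hNmeas : Measurable N)
    (hNmunit : ∀ m X, ‖Nm m X‖ = 1) (hNunit : ∀ X, ‖N X‖ = 1)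
    (hNm : ∀ m, ∀ᵐ X ∂sig (Km m), IsOuterNormalAt (Km m) (Nm m X) X)
    (hN : ∀ᵐ X ∂sig K, IsOuterNormalAt K (N X) X) {ε : ℝ} (hε : 0 < ε) :
    ∀ᶠ m in atTop, ∫ X, w X * f (Nm m X) ∂sig (Km m) < ∫ X, w X * f (N X) ∂sig K + ε := by
  have hK := S.hK
  obtain ⟨B, hB⟩ := (isCompact_sphere (0 : E (n + 1)) 1).exists_bound_of_continuousOn
    hf.continuousOn
  replace hB : ∀ ν, ‖ν‖ = 1 → |f ν| ≤ B := fun ν h => hB ν (by simpa using h)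
  have hdct : Tendsto (fun k : ℕ => ∫ X, w X * Phi K f k X ∂sig K) atTop
      (𝓝 (∫ X, w X * f (N X) ∂sig K)) := by
    refine tendsto_integral_of_dominated_convergence (fun X => w X * B) (fun k =>
      (hw.mul (Phi_continuous hK hf k)).measurable.aestronglyMeasurable)
      (sig_integrable_cont hK S.hKc S.hKi (hw.mul_const B)) (fun k => ?_) ?_
    · filter_upwards [hN, ae_restrict_mem isClosed_frontier.measurableSet] with X hX hXf
      rw [Real.norm_eq_abs, abs_mul, abs_of_nonneg (hw0 X)]
      exact mul_le_mul_of_nonneg_left (Phi_bound hK hf (Nat.cast_nonneg k)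
        (hK.isClosed.frontier_subset hXf) hX hB) (hw0 X)
    · filter_upwards [hN, ae_restrict_mem isClosed_frontier.measurableSet,
        ae_unique_normal hK.isClosed S.hKi] with X hX hXf hu
      exact (Phi_tendsto hK hf (hK.isClosed.frontier_subset hXf) hX
        (fun μ hμ => hu _ _ hμ hX)).const_mul _
  obtain ⟨k, hk⟩ := (hdct.eventually_lt_const (show ∫ X, w X * f (N X) ∂sig K <
    ∫ X, w X * f (N X) ∂sig K + ε / 3 by linarith)).exists
  set I := ∫ X, w X ∂sig K with hI
  have hI0 : 0 ≤ I := integral_nonneg hw0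
  set δ := ε / 3 / (k * I + 1) with hδ
  have hδ0 : 0 < δ := by positivity
  have hkδ : k * δ * I < ε / 3 := by
    have h1 : δ * (k * I + 1) = ε / 3 := by rw [hδ]; field_simp
    nlinarith
  have hPc := Phi_continuous hK hf k
  have hgc : Continuous fun X => w X * (Phi K f k X + k * δ) := by fun_prop
  have hlim := S.weak hgc
  have heq : ∫ X, w X * (Phi K f k X + k * δ) ∂sig K
      = ∫ X, w X * Phi K f k X ∂sig K + k * δ * I := by
    simp only [mul_add]
    rw [integral_add (sig_integrable_cont hK S.hKc S.hKi (g := fun X => w X * Phi K f k X)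
        (by fun_prop)) (sig_integrable_cont hK S.hKc S.hKi (g := fun X => w X * (k * δ))
        (by fun_prop)), integral_mul_const, mul_comm I]
  filter_upwards [hlim.eventually_lt_const (show _ < ∫ X, w X * f (N X) ∂sig K + ε by
    rw [heq]; linarith), S.close hδ0, S.int] with m hm hcl hi
  refine lt_of_le_of_lt ?_ hm
  refine integral_mono_ae (sig_integrable_N (S.hKm m).1 (S.hKm m).2.1 hi hw hf (hNmmeas m)
    (hNmunit m)) (sig_integrable_cont (S.hKm m).1 (S.hKm m).2.1 hi hgc) ?_
  filter_upwards [hNm m, ae_restrict_mem isClosed_frontier.measurableSet] with X hX hXf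
  refine mul_le_mul_of_nonneg_left ?_ (hw0 X)
  have h1 := le_Phi hK hf k X hX.1
  have h2 : hs K (Nm m X) - ⟪X, Nm m X⟫ ≤ δ := by
    rw [sub_le_iff_le_add]
    refine csSup_le ((S.hKi.mono interior_subset).image _) ?_
    rintro _ ⟨Y, hY, rfl⟩
    obtain ⟨a, ha, hd⟩ := hcl.2 Y hY
    have h3 := hX.2 a ha
    have h4 : (⟪Y - a, Nm m X⟫ : ℝ) ≤ δ := by
      refine (real_inner_le_norm _ _).trans ?_
      rw [hX.1, mul_one, ← dist_eq_norm]
      exact hd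
    rw [inner_sub_left] at h4
    linarith
  have h5 : (k : ℝ) * (hs K (Nm m X) - ⟪X, Nm m X⟫) ≤ k * δ := by gcongr
  linarith

lemma Setup.main_cont {K : Set (E (n + 1))} {Km : ℕ → Set (E (n + 1))} (S : Setup K Km)
    {w f : E (n + 1) → ℝ} (hw : Continuous w) (hw0 : ∀ X, 0 ≤ w X) (hf : Continuous f)
    {Nm : ℕ → E (n + 1) → E (n + 1)} {N : E (n + 1) → E (n + 1)}
    (hNmmeas : ∀ m, Measurable (Nm m)) (hNmeas : Measurable N)
    (hNmunit : ∀ m X, ‖Nm m X‖ = 1) (hNunit : ∀ X, ‖N X‖ = 1)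
    (hNm : ∀ m, ∀ᵐ X ∂sig (Km m), IsOuterNormalAt (Km m) (Nm m X) X)
    (hN : ∀ᵐ X ∂sig K, IsOuterNormalAt K (N X) X) :
    Tendsto (fun m => ∫ X, w X * f (Nm m X) ∂sig (Km m)) atTop
      (𝓝 (∫ X, w X * f (N X) ∂sig K)) := by
  rw [Metric.tendsto_nhds]
  intro ε hε
  have h1 := S.upper hw hw0 hf hNmmeas hNmeas hNmunit hNunit hNm hN hε
  have h2 := S.upper hw hw0 hf.neg hNmmeas hNmeas hNmunit hNunit hNm hN hε
  filter_upwards [h1, h2] with m h1 h2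
  simp only [Pi.neg_apply, mul_neg, integral_neg] at h2
  rw [Real.dist_eq, abs_lt]
  constructor <;> linarith

lemma fstE_apply (X : E (n + 1)) (j : Fin n) : fstE X j = X (Fin.castSucc j) := rfl

lemma fstE_continuous : Continuous (fstE : E (n + 1) → E n) := by
  unfold fstE
  refine (EuclideanSpace.equiv (Fin n) ℝ).symm.continuous.comp ?_
  refine continuous_pi fun j => ?_
  show Continuous fun X : E (n + 1) => X (Fin.castSucc j)
  fun_prop

lemma prj_last (X : E (n + 1)) (j : Fin n) : prj (Fin.last n) X j = fstE X j := by
  rw [fstE_apply, prj, Fin.succAbove_last]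

lemma inner_fst (X Y : E (n + 1)) :
    (⟪X, Y⟫ : ℝ) = X (Fin.last n) * Y (Fin.last n) + ⟪fstE X, fstE Y⟫ := by
  rw [inner_split (Fin.last n), PiLp.inner_apply]
  congr 1
  refine Finset.sum_congr rfl fun j _ => ?_
  rw [prj_last, prj_last]
  simp [mul_comm]

lemma norm_fst_le (X : E (n + 1)) : ‖fstE X‖ ≤ ‖X‖ := by
  have h1 := inner_fst X X
  rw [real_inner_self_eq_norm_sq, real_inner_self_eq_norm_sq] at h1
  exact abs_le_of_sq_le_sq' (by nlinarith [mul_self_nonneg (X (Fin.last n))]) (norm_nonneg _) |>.2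

lemma fst_sub (X Y : E (n + 1)) : fstE (X - Y) = fstE X - fstE Y := by
  ext j; simp [fstE_apply]

lemma norm_prj_le (X : E (n + 1)) : ‖prj (Fin.last n) X‖ ≤ ‖fstE X‖ := by
  refine (pi_norm_le_iff_of_nonneg (norm_nonneg _)).2 fun j => ?_
  rw [prj_last]
  exact PiLp.norm_apply_le _ _

lemma prj_eq_zero {X : E (n + 1)} (h : prj (Fin.last n) X = 0) : fstE X = 0 := by
  ext j
  rw [← prj_last, h]; rfl

lemma cyl_patch {L : Set (E (n + 1))} (hL : IsCompact L) (hc : Convex ℝ L) {p : E (n + 1)}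
    (hp0 : fstE p = 0) {ρ R r : ℝ} (hρ : 0 < ρ) (hR : 0 < R) (h1 : closedBall p ρ ⊆ L)
    (h2 : L ⊆ closedBall p R) (hr : r ≤ ρ / 2) :
    frontier L ∩ {X | ‖fstE X‖ < r} ⊆
      patch L (Fin.last n) 1 (ρ / (2 * R)) ∪ patch L (Fin.last n) (-1) (ρ / (2 * R)) := by
  rintro Y ⟨hY, hYr⟩
  have hYr' : ‖fstE Y‖ < r := hYr
  have hYL := hL.isClosed.frontier_subset hY
  have hi : (interior L).Nonempty :=
    ⟨p, mem_interior_iff_mem_nhds.2 (mem_of_superset (closedBall_mem_nhds p hρ) h1)⟩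
  obtain ⟨ν, hν⟩ := exists_normal hc hi hY
  have h3 : p + ρ • ν ∈ L := h1 (by
    rw [mem_closedBall, dist_eq_norm, add_sub_cancel_left, norm_smul, hν.1, mul_one,
      Real.norm_eq_abs, abs_of_pos hρ])
  have h4 := hν.2 _ h3
  rw [inner_add_left, real_inner_smul_left, real_inner_self_eq_norm_sq, hν.1] at h4
  have h5 : ρ ≤ ⟪Y - p, ν⟫ := by rw [inner_sub_left]; linarith
  rw [inner_fst, fst_sub, hp0, sub_zero] at h5
  have h6 : (⟪fstE Y, fstE ν⟫ : ℝ) ≤ r := by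
    refine (real_inner_le_norm _ _).trans ?_
    have := norm_fst_le ν
    rw [hν.1] at this
    nlinarith [norm_nonneg (fstE Y)]
  have h7 : |(Y - p) (Fin.last n)| ≤ R := (abs_coord_le _ _).trans (by
    rw [← dist_eq_norm]; exact h2 hYL)
  have h8 : ρ / 2 ≤ R * |ν (Fin.last n)| := by
    calc ρ / 2 ≤ (Y - p) (Fin.last n) * ν (Fin.last n) := by linarith
      _ ≤ |(Y - p) (Fin.last n) * ν (Fin.last n)| := le_abs_self _
      _ = |(Y - p) (Fin.last n)| * |ν (Fin.last n)| := abs_mul _ _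
      _ ≤ R * |ν (Fin.last n)| := by gcongr
  have h9 : ρ / (2 * R) ≤ |ν (Fin.last n)| := by
    rw [div_le_iff₀ (by positivity)]; linarith
  rcases le_abs.1 h9 with h | h
  · exact Or.inl ⟨hYL, ν, hν, by linarith⟩
  · exact Or.inr ⟨hYL, ν, hν, by linarith⟩

/-- Constant in the cylinder estimate. -/
def Ccyl (n : ℕ) (c : ℝ) : ℝ≥0∞ := ((n / c + n : ℝ).toNNReal : ℝ≥0∞) ^ (n : ℝ)

lemma Ccyl_ne_top (n : ℕ) (c : ℝ) : Ccyl n c ≠ ⊤ :=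
  (ENNReal.rpow_lt_top_of_nonneg (by positivity) (by simp)).ne

lemma patch_lintegral {L : Set (E (n + 1))} {i : Fin (n + 1)} {s c : ℝ} (hs : s * s = 1)
    (hc : 0 < c) {G : (Fin n → ℝ) → ℝ≥0∞} (hG : Measurable G) :
    ∫⁻ X in patch L i s c, G (prj i X) ∂μH[(n : ℝ)] ≤ Ccyl n c * ∫⁻ y, G y := by
  rw [← lintegral_map hG (prj_continuous i).measurable]
  rw [← smul_eq_mul, ← lintegral_smul_measure]
  refine lintegral_mono' ?_ le_rfl
  refine Measure.le_iff.2 fun A hA => ?_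
  rw [Measure.map_apply (prj_continuous i).measurable hA,
    Measure.restrict_apply ((prj_continuous i).measurable hA), inter_comm]
  exact patch_measure hs hc le_rfl A

lemma cyl_lintegral {L : Set (E (n + 1))} (hL : IsCompact L) (hc : Convex ℝ L) {p : E (n + 1)}
    (hp0 : fstE p = 0) {ρ R r : ℝ} (hρ : 0 < ρ) (hR : 0 < R) (h1 : closedBall p ρ ⊆ L)
    (h2 : L ⊆ closedBall p R) (hr : r ≤ ρ / 2) {s : ℝ} (hs : s < 0) :
    ∫⁻ X in {X | ‖fstE X‖ < r}, ENNReal.ofReal (‖fstE X‖ ^ s) ∂(sig L) ≤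
      2 * Ccyl n (ρ / (2 * R)) * ∫⁻ y in ball (0 : Fin n → ℝ) r, ENNReal.ofReal (‖y‖ ^ s) := by
  set G : (Fin n → ℝ) → ℝ≥0∞ := (ball (0 : Fin n → ℝ) r).indicator
    (fun y => ENNReal.ofReal (‖y‖ ^ s)) with hG
  have hGm : Measurable G := by
    refine Measurable.indicator ?_ measurableSet_ball
    fun_prop
  have hcm : MeasurableSet {X : E (n + 1) | ‖fstE X‖ < r} :=
    (isOpen_lt fstE_continuous.norm continuous_const).measurableSet
  have hcpos : 0 < ρ / (2 * R) := by positivity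
  rw [sig, Measure.restrict_restrict hcm, inter_comm, ← lintegral_indicator measurableSet_ball]
  calc ∫⁻ X in frontier L ∩ {X | ‖fstE X‖ < r}, ENNReal.ofReal (‖fstE X‖ ^ s) ∂μH[(n : ℝ)]
      ≤ ∫⁻ X in frontier L ∩ {X | ‖fstE X‖ < r}, G (prj (Fin.last n) X) ∂μH[(n : ℝ)] := by
        refine setLIntegral_mono' (isClosed_frontier.measurableSet.inter hcm) fun X hX => ?_
        have hX2 : ‖fstE X‖ < r := hX.2
        have hmem : prj (Fin.last n) X ∈ ball (0 : Fin n → ℝ) r := by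
          rw [mem_ball_zero_iff]; exact (norm_prj_le X).trans_lt hX2
        rw [hG, indicator_of_mem hmem]
        refine ENNReal.ofReal_le_ofReal ?_
        by_cases h0 : prj (Fin.last n) X = 0
        · rw [prj_eq_zero h0, h0, norm_zero, norm_zero]
        · exact Real.rpow_le_rpow_of_nonpos (norm_pos_iff.2 h0) (norm_prj_le X) hs.le
    _ ≤ ∫⁻ X in patch L (Fin.last n) 1 (ρ / (2 * R)) ∪ patch L (Fin.last n) (-1) (ρ / (2 * R)),
          G (prj (Fin.last n) X) ∂μH[(n : ℝ)] :=
        lintegral_mono_set (cyl_patch hL hc hp0 hρ hR h1 h2 hr)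
    _ ≤ ∫⁻ X in patch L (Fin.last n) 1 (ρ / (2 * R)), G (prj (Fin.last n) X) ∂μH[(n : ℝ)] +
        ∫⁻ X in patch L (Fin.last n) (-1) (ρ / (2 * R)), G (prj (Fin.last n) X) ∂μH[(n : ℝ)] :=
        lintegral_union_le _ _ _
    _ ≤ Ccyl n (ρ / (2 * R)) * (∫⁻ y, G y) + Ccyl n (ρ / (2 * R)) * ∫⁻ y, G y :=
        add_le_add (patch_lintegral (by norm_num) hcpos hGm)
          (patch_lintegral (by norm_num) hcpos hGm)
    _ = 2 * Ccyl n (ρ / (2 * R)) * ∫⁻ y, G y := by ring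

lemma rpow_integrable (hn : n ≠ 0) {s : ℝ} (hs : -(n : ℝ) < s) {R : ℝ} (hR : 0 < R) :
    IntegrableOn (fun y : Fin n → ℝ => ‖y‖ ^ s) (ball 0 R) := by
  have : Nonempty (Fin n) := Fin.pos_iff_nonempty.1 (Nat.pos_of_ne_zero hn)
  rw [integrableOn_fun_norm_addHaar volume (f := fun t => t ^ s)]
  rw [Module.finrank_fin_fun]
  have h : IntegrableOn (fun t : ℝ => t ^ ((n : ℝ) - 1 + s)) (Ioo 0 R) :=
    (intervalIntegral.integrableOn_Ioo_rpow_iff hR).2 (by linarith)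
  refine h.congr_fun (fun t ht => ?_) measurableSet_Ioo
  simp only [smul_eq_mul]
  rw [Real.rpow_add ht.1, ← Real.rpow_natCast, Nat.cast_sub (Nat.one_le_iff_ne_zero.2 hn),
    Nat.cast_one]

lemma rpow_small (hn : n ≠ 0) {s : ℝ} (hs : -(n : ℝ) < s) {r0 : ℝ} (hr0 : 0 < r0) {C : ℝ≥0∞}
    (hC : C ≠ ⊤) {ε : ℝ≥0∞} (hε : ε ≠ 0) :
    ∃ r, 0 < r ∧ r ≤ r0 ∧
      C * ∫⁻ y in ball (0 : Fin n → ℝ) r, ENNReal.ofReal (‖y‖ ^ s) < ε := by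
  have hfin := (rpow_integrable hn hs hr0).lintegral_lt_top
  have hsm : Tendsto (fun r : ℝ => ∫⁻ y in ball (0 : Fin n → ℝ) r,
      ENNReal.ofReal (‖y‖ ^ s) ∂(volume.restrict (ball 0 r0))) (𝓝[>] 0) (𝓝 0) := by
    refine tendsto_setLIntegral_zero hfin.ne ?_
    have h1 : Tendsto (fun r : ℝ => ENNReal.ofReal ((2 * r) ^ n)) (𝓝[>] 0) (𝓝 0) := by
      have : Tendsto (fun r : ℝ => ENNReal.ofReal ((2 * r) ^ n)) (𝓝 0)
          (𝓝 (ENNReal.ofReal ((2 * 0) ^ n))) :=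
        (ENNReal.continuous_ofReal.comp (by fun_prop)).tendsto 0
      rw [mul_zero, zero_pow hn, ENNReal.ofReal_zero] at this
      exact this.mono_left nhdsWithin_le_nhds
    refine tendsto_of_tendsto_of_tendsto_of_le_of_le' tendsto_const_nhds h1
      (Eventually.of_forall fun _ => by simp) ?_
    have hpos : ∀ᶠ ε : ℝ in 𝓝[>] 0, 0 < ε := self_mem_nhdsWithin
    filter_upwards [hpos] with r hr
    refine (Measure.restrict_apply_le _ _).trans ?_
    rw [Real.volume_pi_ball _ hr, Fintype.card_fin]
  have hsm2 := ENNReal.Tendsto.const_mul (a := C) hsm (Or.inr hC)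
  rw [mul_zero] at hsm2
  have hpos : ∀ᶠ ε : ℝ in 𝓝[>] 0, 0 < ε := self_mem_nhdsWithin
  have hle : ∀ᶠ r : ℝ in 𝓝[>] 0, r < r0 := nhdsWithin_le_nhds (Iio_mem_nhds hr0)
  obtain ⟨r, h1, h2, h3⟩ := ((hsm2.eventually_lt_const (pos_iff_ne_zero.2 hε)).and
    (hpos.and hle)).exists
  refine ⟨r, h2, h3.le, ?_⟩
  rwa [Measure.restrict_restrict measurableSet_ball,
    inter_eq_left.2 (ball_subset_ball h3.le)] at h1

/-- Truncated radial weight. -/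
def trunc (s r t : ℝ) : ℝ := t * (max t r) ^ (s - 1)

lemma trunc_continuous {s r : ℝ} (hr : 0 < r) : Continuous (trunc s r) := by
  unfold trunc
  refine continuous_id.mul ((continuous_id.max continuous_const).rpow_const fun t => Or.inl ?_)
  exact (lt_of_lt_of_le hr (le_max_right _ _)).ne'

lemma trunc_eq {s r t : ℝ} (hr : 0 < r) (ht : r ≤ t) : trunc s r t = t ^ s := by
  have h0 : 0 < t := hr.trans_le ht
  rw [trunc, max_eq_left ht, Real.rpow_sub_one h0.ne']
  field_simp

lemma trunc_nonneg {s r t : ℝ} (hr : 0 < r) (ht : 0 ≤ t) : 0 ≤ trunc s r t :=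
  mul_nonneg ht (Real.rpow_nonneg (hr.le.trans (le_max_right _ _)) _)

lemma trunc_le {s r t : ℝ} (hs : s < 0) (hr : 0 < r) (ht : 0 ≤ t) : trunc s r t ≤ t ^ s := by
  rcases ht.eq_or_lt with rfl | h0
  · rw [trunc, zero_mul]; exact Real.rpow_nonneg le_rfl _
  · have h1 : (max t r) ^ (s - 1) ≤ t ^ (s - 1) :=
      Real.rpow_le_rpow_of_nonpos h0 (le_max_left _ _) (by linarith)
    calc trunc s r t ≤ t * t ^ (s - 1) := mul_le_mul_of_nonneg_left h1 ht
      _ = t ^ s := by rw [Real.rpow_sub_one h0.ne']; field_simp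

lemma trunc_error {L : Set (E (n + 1))} (hL : IsCompact L) (hc : Convex ℝ L) {p : E (n + 1)}
    (hp0 : fstE p = 0) {ρ R r : ℝ} (hρ : 0 < ρ) (hR : 0 < R) (h1 : closedBall p ρ ⊆ L)
    (h2 : L ⊆ closedBall p R) (hr0 : 0 < r) (hr : r ≤ ρ / 2) {s : ℝ} (hs : s < 0)
    {Ψ f : E (n + 1) → ℝ} (hΨ : Continuous Ψ) (hΨ0 : ∀ X, 0 ≤ Ψ X) (hf : Continuous f)
    {N : E (n + 1) → E (n + 1)} (hN : Measurable N) (hN1 : ∀ X, ‖N X‖ = 1) {M B : ℝ}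
    (hM : ∀ X ∈ closedBall p R, Ψ X ≤ M) (hB : ∀ ν, ‖ν‖ = 1 → |f ν| ≤ B)
    {ε : ℝ} (hε : 0 < ε)
    (hsmall : ENNReal.ofReal (M * B) * (2 * Ccyl n (ρ / (2 * R))) *
      ∫⁻ y in ball (0 : Fin n → ℝ) r, ENNReal.ofReal (‖y‖ ^ s) < ENNReal.ofReal ε) :
    |∫ X, Ψ X * ‖fstE X‖ ^ s * f (N X) ∂sig L -
      ∫ X, Ψ X * trunc s r ‖fstE X‖ * f (N X) ∂sig L| < ε := by
  have hi : (interior L).Nonempty :=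
    ⟨p, mem_interior_iff_mem_nhds.2 (mem_of_superset (closedBall_mem_nhds p hρ) h1)⟩
  have hfc := fstE_continuous (n := n)
  have htc := trunc_continuous (s := s) hr0
  have hfN : Measurable fun X => f (N X) := hf.measurable.comp hN
  have hI1 : Integrable (fun X => Ψ X * trunc s r ‖fstE X‖ * f (N X)) (sig L) :=
    sig_integrable_N hL hc hi (w := fun X => Ψ X * trunc s r ‖fstE X‖) (by fun_prop) hf hN hN1
  have hcm : MeasurableSet {X : E (n + 1) | ‖fstE X‖ < r} :=
    (isOpen_lt fstE_continuous.norm continuous_const).measurableSet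
  set D : E (n + 1) → ℝ := fun X => Ψ X * (‖fstE X‖ ^ s - trunc s r ‖fstE X‖) * f (N X) with hD
  have hDm : Measurable D := by
    have h3 : Measurable fun X : E (n + 1) => ‖fstE X‖ := hfc.norm.measurable
    have h4 : Measurable fun X : E (n + 1) => trunc s r ‖fstE X‖ := (htc.comp hfc.norm).measurable
    exact (hΨ.measurable.mul ((h3.pow_const s).sub h4)).mul hfN
  have hMB : 0 ≤ M * B := mul_nonneg ((hΨ0 p).trans (hM p (mem_closedBall_self hR.le)))
    ((abs_nonneg _).trans (hB (N p) (hN1 p)))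
  have hbound : ∫⁻ X, ‖D X‖ₑ ∂sig L < ENNReal.ofReal ε := by
    refine lt_of_le_of_lt ?_ hsmall
    calc ∫⁻ X, ‖D X‖ₑ ∂sig L ≤ ∫⁻ X, {X : E (n + 1) | ‖fstE X‖ < r}.indicator
          (fun X => ENNReal.ofReal (M * B) * ENNReal.ofReal (‖fstE X‖ ^ s)) X ∂sig L := by
          refine lintegral_mono_ae ?_
          filter_upwards [ae_restrict_mem isClosed_frontier.measurableSet] with X hX
          have hXR := h2 (hL.isClosed.frontier_subset hX)
          by_cases hXr : ‖fstE X‖ < r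
          · rw [indicator_of_mem (show X ∈ {X : E (n + 1) | ‖fstE X‖ < r} from hXr),
              ← ENNReal.ofReal_mul hMB, ← ofReal_norm]
            refine ENNReal.ofReal_le_ofReal ?_
            have ht0 := trunc_nonneg (s := s) hr0 (norm_nonneg (fstE X))
            have ht1 := trunc_le hs hr0 (norm_nonneg (fstE X))
            rw [hD, Real.norm_eq_abs, abs_mul, abs_mul, abs_of_nonneg (hΨ0 X),
              abs_of_nonneg (sub_nonneg.2 ht1)]
            have e1 := hB (N X) (hN1 X)
            have e2 := hM X hXR
            have hrp : 0 ≤ ‖fstE X‖ ^ s := Real.rpow_nonneg (norm_nonneg _) _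
            calc Ψ X * (‖fstE X‖ ^ s - trunc s r ‖fstE X‖) * |f (N X)|
                ≤ M * ‖fstE X‖ ^ s * B := by
                  refine mul_le_mul (mul_le_mul e2 (by linarith) (by linarith)
                    ((hΨ0 X).trans e2)) e1 (abs_nonneg _)
                    (mul_nonneg ((hΨ0 X).trans e2) hrp)
              _ = M * B * ‖fstE X‖ ^ s := by ring
          · have : D X = 0 := by
              simp only [hD, trunc_eq hr0 (not_lt.1 hXr), sub_self, mul_zero, zero_mul]
            rw [this, enorm_zero]
            exact zero_le
      _ = ENNReal.ofReal (M * B) *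
          ∫⁻ X in {X | ‖fstE X‖ < r}, ENNReal.ofReal (‖fstE X‖ ^ s) ∂(sig L) := by
          rw [lintegral_indicator hcm, lintegral_const_mul']
          exact ENNReal.ofReal_ne_top
      _ ≤ _ := by
          rw [mul_assoc]
          exact mul_le_mul' le_rfl (cyl_lintegral hL hc hp0 hρ hR h1 h2 hr hs)
  have hI2 : Integrable D (sig L) :=
    ⟨hDm.aestronglyMeasurable, hbound.trans ENNReal.ofReal_lt_top⟩
  have heq : ∀ X, Ψ X * ‖fstE X‖ ^ s * f (N X) =
      Ψ X * trunc s r ‖fstE X‖ * f (N X) + D X := fun X => by simp only [hD]; ring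
  simp only [heq]
  rw [integral_add hI1 hI2, add_sub_cancel_left]
  have h5 := enorm_integral_le_lintegral_enorm (μ := sig L) D
  have h6 := h5.trans_lt hbound
  rw [← ofReal_norm] at h6
  exact lt_of_not_ge fun h => not_le.2 h6 (ENNReal.ofReal_le_ofReal h)

lemma Setup.main_sing {K : Set (E (n + 1))} {Km : ℕ → Set (E (n + 1))} (S : Setup K Km)
    (hn : n ≠ 0) {s : ℝ} (hs : s < 0) (hsn : -(n : ℝ) < s) {p : E (n + 1)} (hp : p ∈ interior K)
    (hp0 : fstE p = 0)
    {Ψ f : E (n + 1) → ℝ} (hΨ : Continuous Ψ) (hΨ0 : ∀ X, 0 ≤ Ψ X) (hf : Continuous f)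
    {Nm : ℕ → E (n + 1) → E (n + 1)} {N : E (n + 1) → E (n + 1)}
    (hNmmeas : ∀ m, Measurable (Nm m)) (hNmeas : Measurable N)
    (hNmunit : ∀ m X, ‖Nm m X‖ = 1) (hNunit : ∀ X, ‖N X‖ = 1)
    (hNm : ∀ m, ∀ᵐ X ∂sig (Km m), IsOuterNormalAt (Km m) (Nm m X) X)
    (hN : ∀ᵐ X ∂sig K, IsOuterNormalAt K (N X) X) :
    Tendsto (fun m => ∫ X, Ψ X * ‖fstE X‖ ^ s * f (Nm m X) ∂sig (Km m)) atTop
      (𝓝 (∫ X, Ψ X * ‖fstE X‖ ^ s * f (N X) ∂sig K)) := by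
  obtain ⟨ρ, R, hρ, hR, h1, h2, h3⟩ := S.balls hp
  obtain ⟨B, hB⟩ := (isCompact_sphere (0 : E (n + 1)) 1).exists_bound_of_continuousOn
    hf.continuousOn
  replace hB : ∀ ν, ‖ν‖ = 1 → |f ν| ≤ B := fun ν h => hB ν (by simpa using h)
  obtain ⟨M, hM⟩ := (isCompact_closedBall p R).exists_bound_of_continuousOn hΨ.continuousOn
  replace hM : ∀ X ∈ closedBall p R, Ψ X ≤ M := fun X h => (le_abs_self _).trans (hM X h)
  rw [Metric.tendsto_nhds]
  intro ε hε
  have hε3 : 0 < ε / 3 := by positivity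
  obtain ⟨r, hr0, hr, hsmall⟩ := rpow_small hn hsn (half_pos hρ)
    (C := ENNReal.ofReal (M * B) * (2 * Ccyl n (ρ / (2 * R))))
    (ENNReal.mul_ne_top ENNReal.ofReal_ne_top (ENNReal.mul_ne_top (by simp) (Ccyl_ne_top _ _)))
    (ENNReal.ofReal_pos.2 hε3).ne'
  have hfc := fstE_continuous (n := n)
  have htc := trunc_continuous (s := s) hr0
  have hmain := S.main_cont (w := fun X => Ψ X * trunc s r ‖fstE X‖) (by fun_prop)
    (fun X => mul_nonneg (hΨ0 X) (trunc_nonneg hr0 (norm_nonneg _))) hf hNmmeas hNmeas hNmunit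
    hNunit hNm hN
  have hK := trunc_error S.hK S.hKc hp0 hρ hR h1 h2 hr0 hr hs hΨ hΨ0 hf hNmeas hNunit hM hB hε3
    hsmall
  filter_upwards [Metric.tendsto_nhds.1 hmain _ hε3, h3] with m hm hb
  have hm2 := trunc_error (S.hKm m).1 (S.hKm m).2.1 hp0 hρ hR hb.1 hb.2 hr0 hr hs hΨ hΨ0 hf
    (hNmmeas m) (hNmunit m) hM hB hε3 hsmall
  rw [Real.dist_eq, abs_lt] at *
  constructor <;> linarith [hm.1, hm.2, hK.1, hK.2, hm2.1, hm2.2]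

lemma weight_integrable (hn : n ≠ 0) {s : ℝ} (hs : s < 0) (hsn : -(n : ℝ) < s) {p : E (n + 1)}
    (hp0 : fstE p = 0) {R : ℝ} (hR : 0 < R) {Ψ : E (n + 1) → ℝ} (hΨ : Continuous Ψ) :
    IntegrableOn (fun X => Ψ X * ‖fstE X‖ ^ s) (closedBall p R) := by
  have hfc := fstE_continuous (n := n)
  obtain ⟨M, hM⟩ := (isCompact_closedBall p R).exists_bound_of_continuousOn hΨ.continuousOn
  have hms : Measurable fun X : E (n + 1) => ‖fstE X‖ ^ s := (hfc.norm.measurable).pow_const s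
  refine ⟨(hΨ.measurable.mul hms).aestronglyMeasurable, ?_⟩
  set H : ℝ → ℝ≥0∞ := (Icc (p (Fin.last n) - R) (p (Fin.last n) + R)).indicator fun _ => 1 with hH
  set G : (Fin n → ℝ) → ℝ≥0∞ := (ball (0 : Fin n → ℝ) (R + 1)).indicator
    (fun y => ENNReal.ofReal (‖y‖ ^ s)) with hG
  have hGm : Measurable G := by
    refine Measurable.indicator ?_ measurableSet_ball
    fun_prop
  have hHm : Measurable H := measurable_const.indicator measurableSet_Icc
  have hpres : MeasurePreserving (fun X : E (n + 1) => (X (Fin.last n), prj (Fin.last n) X))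
      volume volume :=
    (volume_preserving_piFinSuccAbove (fun _ : Fin (n + 1) => ℝ) (Fin.last n)).comp
      (EuclideanSpace.volume_preserving_symm_measurableEquiv_toLp (Fin (n + 1)))
  have hcalc : ∫⁻ X : E (n + 1), H (X (Fin.last n)) * G (prj (Fin.last n) X)
      = (∫⁻ a, H a) * ∫⁻ y, G y := by
    have h := hpres.lintegral_comp (f := fun z : ℝ × (Fin n → ℝ) => H z.1 * G z.2)
      ((hHm.comp measurable_fst).mul (hGm.comp measurable_snd))
    rw [h, Measure.volume_eq_prod, lintegral_prod_mul hHm.aemeasurable hGm.aemeasurable]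
  have hG1 : ∫⁻ y, G y < ⊤ := by
    rw [hG, lintegral_indicator measurableSet_ball]
    exact (rpow_integrable hn hsn (by linarith)).lintegral_lt_top
  have hH1 : ∫⁻ a, H a < ⊤ := by
    rw [hH, lintegral_indicator measurableSet_Icc, setLIntegral_one]
    exact isCompact_Icc.measure_lt_top
  show ∫⁻ X in closedBall p R, ‖Ψ X * ‖fstE X‖ ^ s‖ₑ < ⊤
  calc ∫⁻ X in closedBall p R, ‖Ψ X * ‖fstE X‖ ^ s‖ₑ
      ≤ ∫⁻ X in closedBall p R, ENNReal.ofReal M *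
          (H (X (Fin.last n)) * G (prj (Fin.last n) X)) := by
        refine setLIntegral_mono' measurableSet_closedBall fun X hX => ?_
        have hXp : ‖X - p‖ ≤ R := by rw [← dist_eq_norm]; exact hX
        have hm1 : X (Fin.last n) ∈ Icc (p (Fin.last n) - R) (p (Fin.last n) + R) := by
          have h := abs_le.1 ((abs_coord_le (X - p) (Fin.last n)).trans hXp)
          rw [PiLp.sub_apply] at h
          exact ⟨by linarith [h.1], by linarith [h.2]⟩
        have hm2 : prj (Fin.last n) X ∈ ball (0 : Fin n → ℝ) (R + 1) := by
          rw [mem_ball_zero_iff]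
          have h := norm_fst_le (X - p)
          rw [fst_sub, hp0, sub_zero] at h
          linarith [norm_prj_le X]
        rw [hH, hG, indicator_of_mem hm1, indicator_of_mem hm2, one_mul, enorm_mul]
        refine mul_le_mul' ?_ ?_
        · rw [← ofReal_norm]
          exact ENNReal.ofReal_le_ofReal (hM X hX)
        · rw [Real.enorm_eq_ofReal (Real.rpow_nonneg (norm_nonneg _) _)]
          refine ENNReal.ofReal_le_ofReal ?_
          by_cases h0 : prj (Fin.last n) X = 0
          · rw [prj_eq_zero h0, h0, norm_zero, norm_zero]
          · exact Real.rpow_le_rpow_of_nonpos (norm_pos_iff.2 h0) (norm_prj_le X) hs.le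
    _ ≤ ∫⁻ X, ENNReal.ofReal M * (H (X (Fin.last n)) * G (prj (Fin.last n) X)) :=
        setLIntegral_le_lintegral _ _
    _ = ENNReal.ofReal M * ((∫⁻ a, H a) * ∫⁻ y, G y) := by
        rw [lintegral_const_mul' _ _ ENNReal.ofReal_ne_top, hcalc]
    _ < ⊤ := ENNReal.mul_lt_top ENNReal.ofReal_lt_top (ENNReal.mul_lt_top hH1 hG1)

lemma Setup.vol {K : Set (E (n + 1))} {Km : ℕ → Set (E (n + 1))} (S : Setup K Km)
    {p : E (n + 1)} (hp : p ∈ interior K) {w : E (n + 1) → ℝ}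
    (hw : ∀ R > 0, IntegrableOn w (closedBall p R)) :
    Tendsto (fun m => ∫ X in Km m, w X) atTop (𝓝 (∫ X in K, w X)) := by
  obtain ⟨ρ, R, hρ, hR, h1, h2, h3⟩ := S.balls hp
  have hred : ∀ L : Set (E (n + 1)), IsCompact L → L ⊆ closedBall p R →
      ∫ X in L, w X = ∫ X in closedBall p R, L.indicator w X := fun L hL hLR => by
    rw [setIntegral_indicator hL.isClosed.measurableSet, inter_eq_right.2 hLR]
  rw [hred K S.hK h2]
  have hlim : Tendsto (fun m => ∫ X in closedBall p R, (Km m).indicator w X) atTop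
      (𝓝 (∫ X in closedBall p R, K.indicator w X)) := by
    refine tendsto_integral_of_dominated_convergence (fun X => ‖w X‖) (fun m =>
      (hw R hR).1.indicator (S.hKm m).1.isClosed.measurableSet) (hw R hR).norm (fun m => ?_) ?_
    · exact Eventually.of_forall fun X => norm_indicator_le_norm_self _ _
    · have hnull : ∀ᵐ X ∂(volume : Measure (E (n + 1))), X ∉ frontier K :=
        measure_eq_zero_iff_ae_notMem.1 (S.hKc.addHaar_frontier volume)
      filter_upwards [ae_restrict_of_ae hnull] with X hX
      by_cases hXK : X ∈ K
      · have hXi : X ∈ interior K := by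
          by_contra h
          exact hX ⟨subset_closure hXK, h⟩
        obtain ⟨r, hr, hb⟩ := Metric.nhds_basis_closedBall.mem_iff.1
          (mem_interior_iff_mem_nhds.1 hXi)
        refine tendsto_const_nhds.congr' ?_
        filter_upwards [S.close hr] with m hm
        have := mem_of_closedBall (S.hKm m).2.1 (S.hKm m).1.isClosed hr.le le_rfl hm.2 hb
        rw [indicator_of_mem hXK, indicator_of_mem this]
      · obtain ⟨r, hr, hb⟩ := Metric.nhds_basis_closedBall.mem_iff.1
          (S.hK.isClosed.isOpen_compl.mem_nhds hXK)
        refine tendsto_const_nhds.congr' ?_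
        filter_upwards [S.close hr] with m hm
        have : X ∉ Km m := fun h => by
          obtain ⟨b, hbK, hd⟩ := hm.1 X h
          exact hb (by rw [mem_closedBall, dist_comm]; exact hd) hbK
        rw [indicator_of_notMem hXK, indicator_of_notMem this]
  refine hlim.congr' ?_
  filter_upwards [h3] with m hm
  rw [hred _ (S.hKm m).1 hm.2]

lemma surf_integral {w f : E (n + 1) → ℝ} (hw : Measurable w) (hw0 : ∀ X, 0 ≤ w X)
    (hf : Continuous f) (L : Set (E (n + 1))) {N : E (n + 1) → E (n + 1)} (hN : Measurable N) :
    ∫ ν, f ν ∂surfMeas w L N = ∫ X, w X * f (N X) ∂sig L := by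
  rw [surfMeas, integral_map hN.aemeasurable hf.measurable.aestronglyMeasurable,
    integral_withDensity_eq_integral_toReal_smul hw.ennreal_ofReal
      (Eventually.of_forall fun _ => ENNReal.ofReal_lt_top)]
  simp only [ENNReal.toReal_ofReal (hw0 _), smul_eq_mul]

theorem statement_8 {n : ℕ} (q : ℝ) (hq : 0 < q)
    (Ψ : E (n + 1) → ℝ) (hΨc : Continuous Ψ) (hΨ0 : ∀ X, 0 ≤ Ψ X)
    (K : Set (E (n + 1))) (hK : IsCompact K) (hKc : Convex ℝ K)
    (hKi : (interior K).Nonempty)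
    (Km : ℕ → Set (E (n + 1)))
    (hKm : ∀ m, IsCompact (Km m) ∧ Convex ℝ (Km m) ∧ (Km m).Nonempty)
    (hconv : Tendsto (fun m => hausdorffDist (Km m) K) atTop (𝓝 0))
    (hq' : q < n → (0 : E n) ∈ fstE '' (interior K ∩ ⋂ m, interior (Km m)))
    (Nm : ℕ → E (n + 1) → E (n + 1)) (N : E (n + 1) → E (n + 1))
    (hNmmeas : ∀ m, Measurable (Nm m)) (hNmeas : Measurable N)
    (hNmunit : ∀ m X, ‖Nm m X‖ = 1) (hNunit : ∀ X, ‖N X‖ = 1)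
    (hNm : ∀ m, ∀ᵐ X ∂(μH[(n : ℝ)]).restrict (frontier (Km m)),
      IsOuterNormalAt (Km m) (Nm m X) X)
    (hN : ∀ᵐ X ∂(μH[(n : ℝ)]).restrict (frontier K), IsOuterNormalAt K (N X) X) :
    Tendsto (fun m => ∫ X in Km m, Ψ X * ‖fstE X‖ ^ (q - (n : ℝ))) atTop
      (𝓝 (∫ X in K, Ψ X * ‖fstE X‖ ^ (q - (n : ℝ)))) ∧
    ∀ f : E (n + 1) → ℝ, Continuous f →
      Tendsto
        (fun m => ∫ ν, f ν ∂surfMeas (fun X => Ψ X * ‖fstE X‖ ^ (q - (n : ℝ))) (Km m) (Nm m))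
        atTop
        (𝓝 (∫ ν, f ν ∂surfMeas (fun X => Ψ X * ‖fstE X‖ ^ (q - (n : ℝ))) K N)) := by
  have S : Setup K Km := ⟨hK, hKc, hKi, hKm, hconv⟩
  have hfc := fstE_continuous (n := n)
  have hwm : Measurable fun X : E (n + 1) => Ψ X * ‖fstE X‖ ^ (q - (n : ℝ)) :=
    hΨc.measurable.mul (hfc.norm.measurable.pow_const _)
  have hw0 : ∀ X : E (n + 1), 0 ≤ Ψ X * ‖fstE X‖ ^ (q - (n : ℝ)) := fun X =>
    mul_nonneg (hΨ0 X) (Real.rpow_nonneg (norm_nonneg _) _)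
  by_cases hqn : q < n
  · obtain ⟨p, ⟨hp, _⟩, hp0⟩ := hq' hqn
    have hn : n ≠ 0 := by
      rintro rfl
      rw [Nat.cast_zero] at hqn
      linarith
    refine ⟨S.vol hp fun R hR => weight_integrable hn (by linarith) (by linarith) hp0 hR hΨc, ?_⟩
    intro f hf
    simp only [surf_integral hwm hw0 hf _ (hNmmeas _), surf_integral hwm hw0 hf _ hNmeas]
    exact S.main_sing hn (by linarith) (by linarith) hp hp0 hΨc hΨ0 hf hNmmeas hNmeas hNmunit
      hNunit hNm hN
  · have hwc : Continuous fun X : E (n + 1) => Ψ X * ‖fstE X‖ ^ (q - (n : ℝ)) :=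
      hΨc.mul (hfc.norm.rpow_const fun _ => Or.inr (by linarith))
    obtain ⟨p, hp⟩ := hKi
    refine ⟨S.vol hp fun R hR => hwc.continuousOn.integrableOn_compact (isCompact_closedBall p R), ?_⟩
    intro f hf
    simp only [surf_integral hwm hw0 hf _ (hNmmeas _), surf_integral hwm hw0 hf _ hNmeas]
    exact S.main_cont hwc hw0 hf hNmmeas hNmeas hNmunit hNunit hNm hN

end PaperJU

end
end

section
/- Let q > 0, let u ∈ Conv_coe(ℝⁿ) with the origin in the interior of dom(u), and let ζ ∈ C_rec(ℝⁿ) be Lipschitz. Then both integrals ∫_{ℝⁿ} |ζ(∇u(x))| e^{-u(x)} |x|^{q-n} dx and ∫_{∂dom(u)} |ρ_ζ(N_{dom(u)}(y))| e^{-u(y)} |y|^{q-n} dH^{n-1}(y) are finite. -/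
open MeasureTheory Metric Set Filter
open scoped RealInnerProductSpace Pointwise Topology NNReal ENNReal

noncomputable section

namespace PaperJU

open Classical

variable {n : ℕ}

/-! ### Basic facts on convex coercive functions -/

lemma dom_coe {u : E n → EReal} (hu : IsConvFn u) {x : E n} (hx : x ∈ dom u) :
    (((u x).toReal : ℝ) : EReal) = u x :=
  EReal.coe_toReal hx (hu.ne_bot x)

lemma comb_le {u : E n → EReal} (hu : IsConvFn u) {x y : E n} (hx : x ∈ dom u) (hy : y ∈ dom u)
    {s t : ℝ} (hs : 0 ≤ s) (ht : 0 ≤ t) (hst : s + t = 1) :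
    u (s • x + t • y) ≤ ((s * (u x).toReal + t * (u y).toReal : ℝ) : EReal) := by
  have h1 : (x, (u x).toReal) ∈ epi u := by
    simp only [epi, mem_ofPred_eq]; rw [dom_coe hu hx]
  have h2 : (y, (u y).toReal) ∈ epi u := by
    simp only [epi, mem_ofPred_eq]; rw [dom_coe hu hy]
  have := hu.convex_epi h1 h2 hs ht hst
  simpa [epi] using this

lemma convexOn_toReal {u : E n → EReal} (hu : IsConvFn u) :
    ConvexOn ℝ (dom u) (fun x => (u x).toReal) := by
  have key : Convex ℝ (dom u) := by
    intro x hx y hy s t hs ht hst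
    have := comb_le hu hx hy hs ht hst
    intro h
    rw [h] at this
    exact absurd (top_le_iff.1 this) (EReal.coe_ne_top _)
  refine ⟨key, ?_⟩
  intro x hx y hy s t hs ht hst
  have h := comb_le hu hx hy hs ht hst
  rw [← dom_coe hu (key hx hy hs ht hst)] at h
  simpa using EReal.coe_le_coe_iff.1 h

/-- linear growth -/
lemma exists_growth {u : E n → EReal} (hu : IsConvCoe u) (h0 : (0 : E n) ∈ dom u) :
    ∃ a b : ℝ, 0 < a ∧ ∀ x ∈ dom u, a * ‖x‖ - b ≤ (u x).toReal := by
  obtain ⟨hc, hcoe⟩ := hu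
  set c0 := (u 0).toReal with hc0
  have h1 : ∀ᶠ x in cocompact (E n), ((c0 + 1 : ℝ) : EReal) < u x :=
    hcoe.eventually (lt_mem_nhds (EReal.coe_lt_top _))
  rw [← Metric.cobounded_eq_cocompact, ← comap_norm_atTop, eventually_comap, eventually_atTop] at h1
  obtain ⟨R0, hR0⟩ := h1
  set R := max R0 1 with hR
  have hRpos : 0 < R := lt_of_lt_of_le one_pos (le_max_right _ _)
  obtain ⟨z, hz, hmin⟩ := LowerSemicontinuousOn.exists_isMinOn (s := closedBall (0 : E n) R)
    ⟨0, by simp [hRpos.le]⟩ (isCompact_closedBall _ _) (hc.lsc.lowerSemicontinuousOn _)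
  have hz0 : u z ≤ u 0 := hmin (by simp [hRpos.le])
  have hzd : z ∈ dom u := fun h => by
    rw [h] at hz0; exact h0 (top_le_iff.1 hz0)
  refine ⟨1 / R, max (1 - (u z).toReal) (- c0), by positivity, fun x hx => ?_⟩
  by_cases hxR : ‖x‖ ≤ R
  · have h2 : u z ≤ u x := hmin (by simpa using hxR)
    rw [← dom_coe hc hzd, ← dom_coe hc hx] at h2
    have h3 := EReal.coe_le_coe_iff.1 h2
    have h4 : 1 / R * ‖x‖ ≤ 1 := by
      rw [div_mul_eq_mul_div, one_mul]; exact (div_le_one hRpos).2 hxR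
    have := le_max_left (1 - (u z).toReal) (- c0)
    linarith
  · push Not at hxR
    have hxpos : 0 < ‖x‖ := hRpos.trans hxR
    set s := R / ‖x‖ with hs
    have hs0 : 0 < s := by positivity
    have hs1 : s ≤ 1 := (div_le_one hxpos).2 hxR.le
    have h2 := comb_le hc hx h0 hs0.le (sub_nonneg.2 hs1) (by ring)
    have h3 : ((c0 + 1 : ℝ) : EReal) < u (s • x + (1 - s) • 0) := by
      refine hR0 R (le_max_left _ _) _ ?_
      rw [smul_zero, add_zero, norm_smul, Real.norm_of_nonneg hs0.le, hs]
      field_simp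
    have h4 := EReal.coe_lt_coe_iff.1 (h3.trans_le h2)
    have h5 : 1 / s ≤ (u x).toReal - c0 := by
      rw [div_le_iff₀ hs0]; nlinarith
    have h6 : 1 / s = 1 / R * ‖x‖ := by rw [hs]; field_simp
    have := le_max_right (1 - (u z).toReal) (- c0)
    linarith

/-- The square root of `e^{-u}`. -/
def hfun (u : E n → EReal) (x : E n) : ℝ := if u x = ⊤ then 0 else Real.exp (-(u x).toReal / 2)

lemma hfun_nonneg (u : E n → EReal) (x : E n) : 0 ≤ hfun u x := by
  unfold hfun; split_ifs <;> positivity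

lemma expNeg_nonneg (a : EReal) : 0 ≤ expNeg a := by
  unfold expNeg; split_ifs <;> positivity

lemma expNeg_eq (u : E n → EReal) (x : E n) : expNeg (u x) = hfun u x * hfun u x := by
  unfold hfun expNeg; split_ifs
  · simp
  · rw [← Real.exp_add]; ring_nf

lemma hfun_le {u : E n → EReal} {a b : ℝ} (h : ∀ x ∈ dom u, a * ‖x‖ - b ≤ (u x).toReal) (x : E n) :
    hfun u x ≤ Real.exp (b / 2) * Real.exp (-(a / 2) * ‖x‖) := by
  unfold hfun; split_ifs with hx
  · positivity
  · rw [← Real.exp_add]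
    have := h x hx
    apply Real.exp_le_exp.2; linarith

lemma measurable_expNeg {u : E n → EReal} (hu : IsConvFn u) :
    Measurable (fun x => expNeg (u x)) := by
  have h := hu.lsc.measurable
  unfold expNeg
  exact Measurable.ite (h (measurableSet_singleton ⊤)) measurable_const
    (Real.measurable_exp.comp (h.ereal_toReal.neg))

lemma hfun_anti {u : E n → EReal} (hu : IsConvFn u) {x y : E n} (h : u x ≤ u y) :
    hfun u y ≤ hfun u x := by
  unfold hfun
  by_cases hy : u y = ⊤
  · simp only [hy, if_true]; split_ifs <;> positivity
  · have hx : u x ≠ ⊤ := fun h' => hy (by rw [h'] at h; exact top_le_iff.1 h)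
    simp only [hx, hy, if_false]
    have := EReal.toReal_le_toReal h (hu.ne_bot x) hy
    apply Real.exp_le_exp.2; linarith

lemma u_quasi {u : E n → EReal} (hu : IsConvFn u) {x y : E n} (h : u x ≤ u y)
    {s t : ℝ} (hs : 0 ≤ s) (ht : 0 ≤ t) (hst : s + t = 1) :
    u (s • x + t • y) ≤ u y := by
  by_cases hy : u y = ⊤
  · rw [hy]; exact le_top
  · have hx : u x ≠ ⊤ := fun h' => hy (by rw [h'] at h; exact top_le_iff.1 h)
    refine (comb_le hu hx hy hs ht hst).trans ?_
    rw [← dom_coe hu hy]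
    have := EReal.toReal_le_toReal h (hu.ne_bot x) hy
    apply EReal.coe_le_coe_iff.2
    simp only [EReal.toReal_coe]
    have : t = 1 - s := by linarith
    subst this; nlinarith

/-! ### One-dimensional estimate -/

lemma lintegral_deriv_monotone {f : ℝ → ℝ} {a b : ℝ} (hab : a ≤ b) (hf : MonotoneOn f (Icc a b)) :
    ∫⁻ x in Icc a b, ‖deriv f x‖ₑ ≤ ENNReal.ofReal (f b - f a) := by
  obtain ⟨G, hG1, hG2, hG3⟩ := hf.exists_tendsto_deriv_liminf_lintegral_enorm_le hab
  exact (lintegral_enorm_le_liminf_of_tendsto hG1 (fun n => (hG2 n).aemeasurable.enorm)).trans hG3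

lemma lintegral_deriv_antitone {f : ℝ → ℝ} {a b : ℝ} (hab : a ≤ b) (hf : AntitoneOn f (Icc a b)) :
    ∫⁻ x in Icc a b, ‖deriv f x‖ₑ ≤ ENNReal.ofReal (f a - f b) := by
  have := lintegral_deriv_monotone hab hf.neg
  simpa [neg_add_eq_sub] using this

/-- Bound of the total variation along a line for `hfun`. -/
lemma line_bound {u : E n → EReal} (hu : IsConvFn u) (p e : E n) (M : ℝ)
    (hM : ∀ t : ℝ, hfun u (p + t • e) ≤ M) :
    ∫⁻ t : ℝ, ‖deriv (fun t : ℝ => hfun u (p + t • e)) t‖ₑ ≤ ENNReal.ofReal (2 * M) := by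
  set w : ℝ → ℝ := fun t => hfun u (p + t • e) with hw
  have hcont : Continuous (fun t : ℝ => p + t • e) := by fun_prop
  have key : ∀ k : ℕ, ∫⁻ t in Icc (-(k : ℝ)) k, ‖deriv w t‖ₑ ≤ ENNReal.ofReal (2 * M) := by
    intro k
    have hk : (0 : ℝ) ≤ k := Nat.cast_nonneg k
    obtain ⟨t0, ht0, hmin⟩ := LowerSemicontinuousOn.exists_isMinOn (s := Icc (-(k : ℝ)) k)
      (f := fun t : ℝ => u (p + t • e)) ⟨0, by simp⟩ isCompact_Icc
      ((LowerSemicontinuous.comp hu.lsc hcont).lowerSemicontinuousOn _)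
    -- on the segment between `t0` and `t`, values are at most the one at `t`
    have hq : ∀ s t θ : ℝ, t ∈ Icc (-(k : ℝ)) k → 0 ≤ θ → θ ≤ 1 → s = (1 - θ) * t0 + θ * t →
        w t ≤ w s := by
      intro s t θ ht h1 h2 hs
      apply hfun_anti hu
      have := u_quasi hu (hmin ht) (sub_nonneg.2 h2) h1 (by ring)
      refine le_of_eq_of_le ?_ this
      congr 1
      rw [hs]
      module
    have hA : MonotoneOn w (Icc (-(k : ℝ)) t0) := by
      intro t ht s hs hts
      have htk : t ∈ Icc (-(k : ℝ)) k := ⟨ht.1, ht.2.trans ht0.2⟩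
      rcases eq_or_lt_of_le ht.2 with h | h
      · have : s = t := le_antisymm (h ▸ hs.2) hts
        rw [this]
      · have hpos : 0 < t0 - t := by linarith
        refine hq s t ((t0 - s) / (t0 - t)) htk (div_nonneg (by linarith [hs.2]) hpos.le)
          ((div_le_one hpos).2 (by linarith)) ?_
        field_simp; ring
    have hB : AntitoneOn w (Icc t0 k) := by
      intro s hs t ht hst
      have htk : t ∈ Icc (-(k : ℝ)) k := ⟨ht0.1.trans ht.1, ht.2⟩
      rcases eq_or_lt_of_le ht.1 with h | h
      · have : s = t := le_antisymm hst (h ▸ hs.1)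
        rw [this]
      · have hpos : 0 < t - t0 := by linarith
        refine hq s t ((s - t0) / (t - t0)) htk (div_nonneg (by linarith [hs.1]) hpos.le)
          ((div_le_one hpos).2 (by linarith)) ?_
        field_simp; ring
    have hU : Icc (-(k : ℝ)) k = Icc (-(k : ℝ)) t0 ∪ Icc t0 k :=
      (Icc_union_Icc_eq_Icc ht0.1 ht0.2).symm
    rw [hU]
    refine (lintegral_union_le _ _ _).trans ?_
    have hM0 : 0 ≤ M := (hfun_nonneg u _).trans (hM 0)
    rw [two_mul, ENNReal.ofReal_add hM0 hM0]
    refine add_le_add ((lintegral_deriv_monotone ht0.1 hA).trans ?_)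
      ((lintegral_deriv_antitone ht0.2 hB).trans ?_)
    · apply ENNReal.ofReal_le_ofReal
      have := hM t0; have := hfun_nonneg u (p + (-(k : ℝ)) • e); simp only [hw]; linarith
    · apply ENNReal.ofReal_le_ofReal
      have := hM t0; have := hfun_nonneg u (p + (k : ℝ) • e); simp only [hw]; linarith
  have hUn : (⋃ k : ℕ, Icc (-(k : ℝ)) k) = univ := by
    refine eq_univ_of_forall fun t => mem_iUnion.2 ?_
    obtain ⟨k, hk⟩ := exists_nat_ge |t|
    exact ⟨k, abs_le.1 hk⟩
  have hmono : Monotone (fun k : ℕ => Icc (-(k : ℝ)) k) := by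
    intro i j hij
    have : (i : ℝ) ≤ j := by exact_mod_cast hij
    exact Icc_subset_Icc (by linarith) this
  rw [← setLIntegral_univ, ← hUn, setLIntegral_iUnion_of_directed _ hmono.directed_le]
  exact iSup_le key

/-! ### Radial weights -/

lemma rpow_exp_bdd (s c r : ℝ) (hc : 0 < c) (hr : 0 < r) :
    ∃ C : ℝ, 0 ≤ C ∧ ∀ t, r ≤ t → t ^ s * Real.exp (-c * t) ≤ C := by
  have h1 := tendsto_rpow_mul_exp_neg_mul_atTop_nhds_zero s c hc
  obtain ⟨T, hT⟩ := eventually_atTop.1 (h1.eventually (ge_mem_nhds one_pos))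
  have hcont : ContinuousOn (fun t : ℝ => t ^ s * Real.exp (-c * t)) (Icc r T) := by
    refine ContinuousOn.mul ?_ (by fun_prop)
    exact continuousOn_id.rpow_const (fun x hx => Or.inl (hr.trans_le hx.1).ne')
  obtain ⟨C, hC⟩ := (isCompact_Icc.bddAbove_image hcont)
  refine ⟨max C 1, le_max_of_le_right zero_le_one, fun t ht => ?_⟩
  by_cases h : t ≤ T
  · exact le_max_of_le_left (hC ⟨t, ⟨ht, h⟩, rfl⟩)
  · exact le_max_of_le_right (hT t (not_le.1 h).le)

lemma integrable_exp_neg_norm (m : ℕ) (c : ℝ) (hc : 0 < c) :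
    Integrable (fun y : Fin m → ℝ => Real.exp (-c * ‖y‖)) := by
  obtain ⟨C, hC0, hC⟩ := rpow_exp_bdd ((m : ℝ) + 1) c 1 hc one_pos
  have h1 : Integrable (fun y : Fin m → ℝ => (1 + ‖y‖) ^ (-((m : ℝ) + 1))) :=
    integrable_one_add_norm (by simp)
  refine (h1.const_mul (C * Real.exp c)).mono' (by fun_prop) (ae_of_all _ fun y => ?_)
  have hp : 0 < 1 + ‖y‖ := by positivity
  rw [Real.norm_of_nonneg (Real.exp_pos _).le, Real.rpow_neg hp.le, ← div_eq_mul_inv,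
    le_div_iff₀ (by positivity)]
  have h2 := hC (1 + ‖y‖) (by simp)
  have h3 : Real.exp (-c * ‖y‖) = Real.exp (-c * (1 + ‖y‖)) * Real.exp c := by
    rw [← Real.exp_add]; ring_nf
  rw [h3]
  nlinarith [Real.exp_pos c]

lemma integrable_radial (m : ℕ) (q c : ℝ) (hq : 0 < q) (hc : 0 < c) :
    Integrable (fun x : E (m + 1) =>
      Real.exp (-c * ‖x‖) * ‖x‖ ^ (q - ((m + 1 : ℕ) : ℝ))) := by
  have h := (integrable_fun_norm_addHaar (volume : Measure (E (m + 1)))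
    (f := fun t : ℝ => Real.exp (-c * t) * t ^ (q - ((m + 1 : ℕ) : ℝ)))).2
  refine h ?_
  have h2 := integrableOn_rpow_mul_exp_neg_mul_rpow (p := 1) (s := q - 1) (b := c)
    (by linarith) one_pos hc
  refine h2.congr_fun (fun t ht => ?_) measurableSet_Ioi
  have ht : 0 < t := ht
  simp only [finrank_euclideanSpace, Fintype.card_fin, smul_eq_mul, Real.rpow_one]
  rw [Nat.add_sub_cancel, ← Real.rpow_natCast, mul_left_comm, ← Real.rpow_add ht, mul_comm]
  congr 2
  push_cast; ring

/-! ### Integrability of the gradient -/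

lemma lintegral_partial {m : ℕ} {u : E (m + 1) → EReal} (hu : IsConvFn u) {a b : ℝ} (ha : 0 < a)
    (hab : ∀ x ∈ dom u, a * ‖x‖ - b ≤ (u x).toReal) (i : Fin (m + 1)) :
    ∫⁻ x : E (m + 1), ‖fderiv ℝ (hfun u) x (EuclideanSpace.single i (1 : ℝ))‖ₑ < ⊤ := by
  set e : E (m + 1) := EuclideanSpace.single i (1 : ℝ) with he
  have hmeas : Measurable (fun x : E (m + 1) => ‖fderiv ℝ (hfun u) x e‖ₑ) :=
    (measurable_fderiv_apply_const ℝ (hfun u) e).enorm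
  have hmp := (PiLp.volume_preserving_toLp (Fin (m + 1))).comp
    ((volume_preserving_piFinSuccAbove (fun _ : Fin (m + 1) => ℝ) i).symm)
  rw [← hmp.lintegral_comp hmeas, Measure.volume_eq_prod]
  refine lt_of_eq_of_lt (lintegral_prod_symm _ (hmeas.comp hmp.measurable).aemeasurable) ?_
  have hpt : ∀ (t : ℝ) (y : Fin m → ℝ),
      (WithLp.toLp 2 ((MeasurableEquiv.piFinSuccAbove (fun _ : Fin (m + 1) => ℝ) i).symm (t, y)) :
        E (m + 1)) = WithLp.toLp 2 (i.insertNth (0 : ℝ) y) + t • e := by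
    intro t y
    ext j
    refine Fin.succAboveCases i ?_ (fun j => ?_) j
    · simp [he, MeasurableEquiv.piFinSuccAbove_symm_apply]
    · simp [he, MeasurableEquiv.piFinSuccAbove_symm_apply]
  have hnorm : ∀ (t : ℝ) (y : Fin m → ℝ),
      ‖y‖ ≤ ‖(WithLp.toLp 2 (i.insertNth (0 : ℝ) y) + t • e : E (m + 1))‖ := by
    intro t y
    refine (pi_norm_le_iff_of_nonneg (norm_nonneg _)).2 fun j => ?_
    have := PiLp.norm_apply_le (WithLp.toLp 2 (i.insertNth (0 : ℝ) y) + t • e : E (m + 1))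
      (i.succAbove j)
    simpa [he] using this
  have hbound : ∀ y : Fin m → ℝ, ∫⁻ t : ℝ, ((fun x : E (m + 1) => ‖fderiv ℝ (hfun u) x e‖ₑ) ∘
        (WithLp.toLp 2 ∘ (MeasurableEquiv.piFinSuccAbove (fun _ : Fin (m + 1) => ℝ) i).symm)) (t, y)
      ≤ ENNReal.ofReal (2 * (Real.exp (b / 2) * Real.exp (-(a / 2) * ‖y‖))) := by
    intro y
    refine le_trans (lintegral_mono fun t => ?_)
      (line_bound hu (WithLp.toLp 2 (i.insertNth (0 : ℝ) y)) e _ fun t => ?_)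
    · simp only [Function.comp_apply]
      rw [hpt]
      set p : E (m + 1) := WithLp.toLp 2 (i.insertNth (0 : ℝ) y)
      by_cases hd : DifferentiableAt ℝ (hfun u) (p + t • e)
      · have h1 : HasDerivAt (fun t : ℝ => p + t • e) e t := by
          simpa using ((hasDerivAt_id t).smul_const e).const_add p
        have h2 := (hd.hasFDerivAt.comp_hasDerivAt t h1).deriv
        rw [← h2]; rfl
      · rw [fderiv_zero_of_not_differentiableAt hd]; simp
    · refine (hfun_le hab _).trans ?_
      gcongr ?_ * ?_
      apply Real.exp_le_exp.2
      have := hnorm t y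
      nlinarith
  refine (lintegral_mono hbound).trans_lt ?_
  exact (((integrable_exp_neg_norm m (a / 2) (by positivity)).const_mul _).const_mul
    2).lintegral_lt_top

lemma norm_clm_le_sum {m : ℕ} (A : E m →L[ℝ] ℝ) :
    ‖A‖ ≤ ∑ i, |A (EuclideanSpace.single i (1 : ℝ))| := by
  refine A.opNorm_le_bound (Finset.sum_nonneg fun i _ => abs_nonneg _) fun x => ?_
  have hx : x = ∑ i, x i • EuclideanSpace.single i (1 : ℝ) := by
    have := (EuclideanSpace.basisFun (Fin m) ℝ).sum_repr x
    simpa using this.symm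
  conv_lhs => rw [hx]
  rw [map_sum, Finset.sum_mul]
  refine (norm_sum_le _ _).trans (Finset.sum_le_sum fun i _ => ?_)
  rw [map_smul, smul_eq_mul, norm_mul, mul_comm, Real.norm_eq_abs]
  gcongr
  exact PiLp.norm_apply_le x i

lemma measurable_grad (u : E n → EReal) : Measurable (grad u) := by
  unfold grad gradient
  exact (InnerProductSpace.toDual ℝ (E n)).symm.continuous.measurable.comp (measurable_fderiv ℝ _)

lemma measurable_hfun {u : E n → EReal} (hu : IsConvFn u) : Measurable (hfun u) := by
  have h := hu.lsc.measurable
  unfold hfun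
  exact Measurable.ite (h (measurableSet_singleton ⊤)) measurable_const
    (Real.measurable_exp.comp (h.ereal_toReal.neg.div_const 2))

lemma grad_mul_le {u : E n → EReal} (hu : IsConvFn u) :
    ∀ᵐ x : E n, ‖grad u x‖ * hfun u x ≤ 2 * ‖fderiv ℝ (hfun u) x‖ := by
  have h1 : (volume : Measure (E n)) (frontier (dom u)) = 0 :=
    (convexOn_toReal hu).1.addHaar_frontier volume
  filter_upwards [compl_mem_ae_iff.2 h1] with x hx
  by_cases hxd : x ∈ dom u
  · have hxi : x ∈ interior (dom u) := by
      by_contra h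
      exact hx ⟨subset_closure hxd, h⟩
    have hng : ‖grad u x‖ = ‖fderiv ℝ (fun y => (u y).toReal) x‖ := by
      unfold grad gradient; simp
    rw [hng]
    by_cases hd : DifferentiableAt ℝ (fun y => (u y).toReal) x
    · have he : hfun u =ᶠ[𝓝 x] fun y => Real.exp (-(1 / 2 : ℝ) * (u y).toReal) := by
        filter_upwards [isOpen_interior.mem_nhds hxi] with y hy
        have : u y ≠ ⊤ := interior_subset hy
        unfold hfun; rw [if_neg this]; ring_nf
      rw [he.fderiv_eq]
      have h3 := ((hd.hasFDerivAt.const_mul (-(1 / 2 : ℝ))).exp).fderiv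
      rw [h3, norm_smul, norm_smul, ← he.eq_of_nhds, Real.norm_of_nonneg (hfun_nonneg u x)]
      apply le_of_eq; norm_num; ring
    · rw [fderiv_zero_of_not_differentiableAt hd]; simp
  · have : hfun u x = 0 := by
      unfold hfun; rw [if_pos (not_not.1 hxd)]
    rw [this, mul_zero]; positivity

lemma integrable_grad {m : ℕ} {u : E (m + 1) → EReal} (hu : IsConvFn u) {a b : ℝ} (ha : 0 < a)
    (hab : ∀ x ∈ dom u, a * ‖x‖ - b ≤ (u x).toReal) :
    Integrable (fun x => ‖grad u x‖ * hfun u x) := by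
  have h1 : Integrable (fun x : E (m + 1) =>
      ∑ i, |fderiv ℝ (hfun u) x (EuclideanSpace.single i (1 : ℝ))|) := by
    refine integrable_finsetSum _ fun i _ => Integrable.abs ?_
    exact ⟨(measurable_fderiv_apply_const ℝ (hfun u) _).aestronglyMeasurable,
      lintegral_partial hu ha hab i⟩
  refine (h1.const_mul 2).mono'
    ((measurable_grad u).norm.mul (measurable_hfun hu)).aestronglyMeasurable ?_
  filter_upwards [grad_mul_le hu] with x hx
  rw [Real.norm_of_nonneg (mul_nonneg (norm_nonneg _) (hfun_nonneg u x))]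
  exact hx.trans (mul_le_mul_of_nonneg_left (norm_clm_le_sum _) zero_le_two)

/-! ### Surface area of convex boundaries -/

/-- The Euclidean vector space point in the cube sphere of radius `R`. -/
def cubeSphere (m : ℕ) (R : ℝ) : Set (E m) := {z | ‖WithLp.ofLp z‖ = R}

lemma cubeSphere_measure (m : ℕ) : ∃ D : ℝ≥0, ∀ R : ℝ, 0 < R →
    μH[(m : ℝ)] (cubeSphere (m + 1) R) ≤ D * ENNReal.ofReal (R ^ m) := by
  obtain ⟨K, hK⟩ : ∃ K : ℝ≥0, ∀ (i : Fin (m + 1)) (c : ℝ), LipschitzWith K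
      (fun y : Fin m → ℝ => (WithLp.toLp 2 (i.insertNth c y : Fin (m + 1) → ℝ) : E (m + 1))) := by
    refine ⟨_, fun i c => (PiLp.lipschitzWith_toLp 2 (fun _ : Fin (m + 1) => ℝ)).comp
      (LipschitzWith.of_dist_le_mul (K := 1) fun y y' => ?_)⟩
    rw [NNReal.coe_one, one_mul, dist_pi_le_iff dist_nonneg]
    intro j
    refine Fin.succAboveCases i ?_ (fun j => ?_) j
    · simp
    · simpa using dist_le_pi_dist y y' j
  refine ⟨(m + 1) * (2 * (K ^ m * 2 ^ m)), fun R hR => ?_⟩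
  have hsub : cubeSphere (m + 1) R ⊆ ⋃ i : Fin (m + 1), ⋃ c : Bool,
      (fun y : Fin m → ℝ => (WithLp.toLp 2 (i.insertNth (if c then R else -R) y :
        Fin (m + 1) → ℝ) : E (m + 1))) '' closedBall 0 R := by
    intro z hz
    have hz : ‖WithLp.ofLp z‖ = R := hz
    obtain ⟨i, hi⟩ : ∃ i, ‖z i‖ = R := by
      by_contra hcon
      push Not at hcon
      have : ‖WithLp.ofLp z‖ < R := (pi_norm_lt_iff hR).2 fun i =>
        lt_of_le_of_ne (hz ▸ norm_le_pi_norm (WithLp.ofLp z) i) (hcon i)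
      exact this.ne hz
    simp only [mem_iUnion]
    have hzz : ∀ c : ℝ, z i = c →
        (WithLp.toLp 2 (i.insertNth c (fun j => z (i.succAbove j)) : Fin (m + 1) → ℝ) : E (m + 1))
          = z := by
      intro c hc
      ext j
      refine Fin.succAboveCases i ?_ (fun j => ?_) j
      · simp [hc]
      · simp
    have hb : (fun j => z (i.succAbove j)) ∈ closedBall (0 : Fin m → ℝ) R := by
      rw [mem_closedBall_zero_iff, pi_norm_le_iff_of_nonneg hR.le]
      intro j
      exact hz ▸ norm_le_pi_norm (WithLp.ofLp z) (i.succAbove j)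
    rw [Real.norm_eq_abs] at hi
    rcases eq_or_eq_neg_of_abs_eq hi with h | h
    · exact ⟨i, true, _, hb, by simpa using hzz R h⟩
    · exact ⟨i, false, _, hb, by simpa using hzz (-R) h⟩
  have hball : μH[(m : ℝ)] (closedBall (0 : Fin m → ℝ) R) = ENNReal.ofReal ((2 * R) ^ m) := by
    have := hausdorffMeasure_pi_real (ι := Fin m)
    rw [Fintype.card_fin] at this
    rw [this, Real.volume_pi_closedBall _ hR.le, Fintype.card_fin]
  have hone : ∀ (i : Fin (m + 1)) (c : ℝ), μH[(m : ℝ)]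
      ((fun y : Fin m → ℝ => (WithLp.toLp 2 (i.insertNth c y : Fin (m + 1) → ℝ) : E (m + 1))) ''
        closedBall 0 R) ≤ (K : ℝ≥0∞) ^ m * ENNReal.ofReal ((2 * R) ^ m) := by
    intro i c
    refine ((hK i c).hausdorffMeasure_image_le (Nat.cast_nonneg m) _).trans ?_
    rw [hball, ENNReal.rpow_natCast]
  refine (measure_mono hsub).trans ?_
  refine (measure_iUnion_le _).trans ?_
  rw [tsum_fintype]
  refine (Finset.sum_le_sum (g := fun _ => 2 * ((K : ℝ≥0∞) ^ m * ENNReal.ofReal ((2 * R) ^ m)))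
    fun i _ => ?_).trans ?_
  · refine (measure_iUnion_le _).trans ?_
    rw [tsum_fintype]
    refine (Finset.sum_le_sum fun c _ => hone i _).trans ?_
    simp
  · apply le_of_eq
    rw [mul_pow, ENNReal.ofReal_mul (by positivity), ENNReal.ofReal_pow (by norm_num)]
    simp
    ring

/-- The part of the boundary of a convex set in a cube has controlled area. -/
lemma frontier_measure (m : ℕ) : ∃ D : ℝ≥0, ∀ (K : Set (E (m + 1))), Convex ℝ K →
    (interior K).Nonempty → ∀ R : ℝ, 0 < R →
    μH[(m : ℝ)] {y | y ∈ frontier K ∧ ‖WithLp.ofLp y‖ ≤ R} ≤ D * ENNReal.ofReal (R ^ m) := by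
  obtain ⟨D, hD⟩ := cubeSphere_measure m
  refine ⟨D, fun K hK hKi R hR => ?_⟩
  set S : Set (E (m + 1)) := {z | z ∈ cubeSphere (m + 1) R ∧
    ∃ y ∈ frontier K, ∀ x ∈ closure K, (⟪z - y, x - y⟫ : ℝ) ≤ 0} with hS
  have hch : ∀ z : E (m + 1), ∃ y : E (m + 1), z ∈ S →
      (y ∈ frontier K ∧ ∀ x ∈ closure K, (⟪z - y, x - y⟫ : ℝ) ≤ 0) := by
    intro z
    by_cases hz : z ∈ S
    · obtain ⟨y, hy⟩ := hz.2
      exact ⟨y, fun _ => hy⟩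
    · exact ⟨0, fun h => absurd h hz⟩
  choose P hP using hch
  have uniq : ∀ z1 z2 y1 y2 : E (m + 1), y1 ∈ frontier K → y2 ∈ frontier K →
      (∀ x ∈ closure K, (⟪z1 - y1, x - y1⟫ : ℝ) ≤ 0) →
      (∀ x ∈ closure K, (⟪z2 - y2, x - y2⟫ : ℝ) ≤ 0) → ‖y1 - y2‖ ≤ ‖z1 - z2‖ := by
    intro z1 z2 y1 y2 hy1 hy2 h1 h2
    have e1 := h1 y2 hy2.1
    have e2 := h2 y1 hy1.1
    have e3 : ‖y1 - y2‖ * ‖y1 - y2‖ ≤ ⟪z1 - z2, y1 - y2⟫ := by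
      rw [← real_inner_self_eq_norm_mul_norm]
      have : (⟪z1 - z2, y1 - y2⟫ : ℝ) - ⟪y1 - y2, y1 - y2⟫
          = -⟪z1 - y1, y2 - y1⟫ - ⟪z2 - y2, y1 - y2⟫ := by
        simp only [inner_sub_left, inner_sub_right]; ring
      linarith
    have e4 := real_inner_le_norm (z1 - z2) (y1 - y2)
    by_contra hcon
    push Not at hcon
    have : 0 < ‖y1 - y2‖ := (norm_nonneg _).trans_lt hcon
    nlinarith
  have hLip : LipschitzOnWith 1 P S := by
    refine LipschitzOnWith.of_dist_le_mul fun z1 h1 z2 h2 => ?_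
    rw [NNReal.coe_one, one_mul, dist_eq_norm, dist_eq_norm]
    exact uniq z1 z2 _ _ (hP z1 h1).1 (hP z2 h2).1 (hP z1 h1).2 (hP z2 h2).2
  have hsub : {y | y ∈ frontier K ∧ ‖WithLp.ofLp y‖ ≤ R} ⊆ P '' S := by
    rintro y ⟨hy, hyR⟩
    obtain ⟨f, hf⟩ := geometric_hahn_banach_open_point hK.interior isOpen_interior hy.2
    set ν := (InnerProductSpace.toDual ℝ (E (m + 1))).symm f with hν
    have hfν : ∀ x, f x = ⟪ν, x⟫ := fun x => by
      rw [hν, InnerProductSpace.toDual_symm_apply]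
    have hν0 : ν ≠ 0 := by
      intro h
      obtain ⟨x, hx⟩ := hKi
      have := hf x hx
      rw [hfν, hfν, h] at this
      simp at this
    have hcl : ∀ x ∈ closure K, f x ≤ f y := by
      intro x hx
      rw [← hK.closure_interior_eq_closure_of_nonempty_interior hKi] at hx
      have : closure (interior K) ⊆ {x | f x ≤ f y} :=
        closure_minimal (fun x hx => (hf x hx).le) (isClosed_le f.continuous continuous_const)
      exact this hx
    have hν' : 0 < ‖WithLp.ofLp ν‖ := by
      rw [norm_pos_iff]
      intro h
      exact hν0 (by ext i; simp [h])
    obtain ⟨t, ht, htR⟩ : ∃ t : ℝ, 0 ≤ t ∧ ‖WithLp.ofLp (y + t • ν)‖ = R := by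
      set T := (R + R) / ‖WithLp.ofLp ν‖ with hT
      have hT0 : 0 ≤ T := by positivity
      have hc : ContinuousOn (fun t : ℝ => ‖WithLp.ofLp (y + t • ν)‖) (Icc 0 T) := by
        fun_prop
      have h1 := intermediate_value_Icc hT0 hc
      have h2 : R ≤ ‖WithLp.ofLp (y + T • ν)‖ := by
        have h3 : ‖T • WithLp.ofLp ν‖ = R + R := by
          rw [norm_smul, Real.norm_of_nonneg hT0, hT]; field_simp
        have h4 := norm_sub_le (WithLp.ofLp (y + T • ν)) (WithLp.ofLp y)
        have h5 : WithLp.ofLp (y + T • ν) - WithLp.ofLp y = T • WithLp.ofLp ν := by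
          simp
        rw [h5, h3] at h4
        linarith
      obtain ⟨t, ht, h6⟩ := h1 ⟨by simpa using hyR, h2⟩
      exact ⟨t, ht.1, h6⟩
    have hprop : ∀ x ∈ closure K, (⟪(y + t • ν) - y, x - y⟫ : ℝ) ≤ 0 := by
      intro x hx
      have := hcl x hx
      rw [hfν, hfν] at this
      rw [add_sub_cancel_left, inner_smul_left, inner_sub_right]
      simp only [conj_trivial]
      nlinarith
    have hmem : y + t • ν ∈ S := ⟨htR, y, hy, hprop⟩
    refine ⟨y + t • ν, hmem, ?_⟩
    have := uniq _ _ _ _ (hP _ hmem).1 hy (hP _ hmem).2 hprop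
    rw [sub_self, norm_zero] at this
    exact sub_eq_zero.1 (norm_le_zero_iff.1 this)
  calc _ ≤ μH[(m : ℝ)] (P '' S) := measure_mono hsub
    _ ≤ (1 : ℝ≥0) ^ (m : ℝ) * μH[(m : ℝ)] S := hLip.hausdorffMeasure_image_le (Nat.cast_nonneg m)
    _ = μH[(m : ℝ)] S := by simp
    _ ≤ μH[(m : ℝ)] (cubeSphere (m + 1) R) := measure_mono fun z hz => hz.1
    _ ≤ _ := hD R hR

lemma frontier_integral {m : ℕ} {K : Set (E (m + 1))} (hK : Convex ℝ K)
    (hKi : (interior K).Nonempty) {c : ℝ} (hc : 0 < c) :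
    ∫⁻ y in frontier K, ENNReal.ofReal (Real.exp (-c * ‖y‖)) ∂μH[(m : ℝ)] < ⊤ := by
  obtain ⟨D, hD⟩ := frontier_measure m
  set A : ℕ → Set (E (m + 1)) := fun k =>
    {y | y ∈ frontier K ∧ (k : ℝ) ≤ ‖WithLp.ofLp y‖ ∧ ‖WithLp.ofLp y‖ ≤ (k : ℝ) + 1} with hA
  have hAm : ∀ k, MeasurableSet (A k) := by
    intro k
    have hcn : Continuous (fun y : E (m + 1) => ‖WithLp.ofLp y‖) := by fun_prop
    refine IsClosed.measurableSet ?_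
    refine isClosed_frontier.inter (IsClosed.inter ?_ ?_)
    · exact isClosed_le continuous_const hcn
    · exact isClosed_le hcn continuous_const
  have hcov : frontier K ⊆ ⋃ k, A k := by
    intro y hy
    refine mem_iUnion.2 ⟨⌊‖WithLp.ofLp y‖⌋₊, hy, Nat.floor_le (norm_nonneg _),
      (Nat.lt_floor_add_one _).le⟩
  have hk : ∀ k : ℕ, ∫⁻ y in A k, ENNReal.ofReal (Real.exp (-c * ‖y‖)) ∂μH[(m : ℝ)] ≤
      D * ENNReal.ofReal (Real.exp c * (((k + 1 : ℕ) : ℝ) ^ m * Real.exp (-c * (k + 1 : ℕ)))) := by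
    intro k
    calc _ ≤ ∫⁻ y in A k, ENNReal.ofReal (Real.exp (-c * k)) ∂μH[(m : ℝ)] := by
          refine setLIntegral_mono' (hAm k) fun y hy => ?_
          apply ENNReal.ofReal_le_ofReal
          apply Real.exp_le_exp.2
          have h1 : ‖WithLp.ofLp y‖ ≤ ‖y‖ :=
            (pi_norm_le_iff_of_nonneg (norm_nonneg _)).2 fun j => PiLp.norm_apply_le y j
          have h2 := hy.2.1
          nlinarith
      _ = ENNReal.ofReal (Real.exp (-c * k)) * μH[(m : ℝ)] (A k) := by
          rw [setLIntegral_const]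
      _ ≤ ENNReal.ofReal (Real.exp (-c * k)) *
            (D * ENNReal.ofReal (((k : ℝ) + 1) ^ m)) := by
          gcongr
          refine (measure_mono ?_).trans (hD K hK hKi ((k : ℝ) + 1) (by positivity))
          exact fun y hy => ⟨hy.1, hy.2.2⟩
      _ = _ := by
          rw [mul_left_comm, ← ENNReal.ofReal_mul (Real.exp_pos _).le]
          congr 2
          have : Real.exp (-c * k) = Real.exp c * Real.exp (-c * (k + 1 : ℕ)) := by
            rw [← Real.exp_add]; push_cast; ring_nf
          rw [this]; push_cast; ring
  have hsum : Summable fun k : ℕ =>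
      Real.exp c * (((k + 1 : ℕ) : ℝ) ^ m * Real.exp (-c * (k + 1 : ℕ))) :=
    ((summable_nat_add_iff 1).2 (Real.summable_pow_mul_exp_neg_nat_mul m hc)).mul_left _
  calc _ ≤ ∫⁻ y in ⋃ k, A k, ENNReal.ofReal (Real.exp (-c * ‖y‖)) ∂μH[(m : ℝ)] :=
        lintegral_mono_set hcov
    _ ≤ ∑' k, ∫⁻ y in A k, ENNReal.ofReal (Real.exp (-c * ‖y‖)) ∂μH[(m : ℝ)] :=
        lintegral_iUnion_le _ _
    _ ≤ ∑' k : ℕ, D * ENNReal.ofReal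
        (Real.exp c * (((k + 1 : ℕ) : ℝ) ^ m * Real.exp (-c * (k + 1 : ℕ)))) :=
        ENNReal.tsum_le_tsum hk
    _ < ⊤ := by
        rw [ENNReal.tsum_mul_left, ← ENNReal.ofReal_tsum_of_nonneg (fun k => by positivity) hsum]
        exact ENNReal.mul_lt_top ENNReal.coe_lt_top ENNReal.ofReal_lt_top

theorem statement_11 {n : ℕ} (q : ℝ) (hq : 0 < q)
    (u : E n → EReal) (hu : IsConvCoe u) (h0 : (0 : E n) ∈ interior (dom u))
    (ζ ρ : E n → ℝ) (hζ : IsCRec ζ ρ) (L : NNReal) (hLip : LipschitzWith L ζ)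
    (N : E n → E n) (hNmeas : Measurable N)
    (hN : ∀ᵐ y ∂(μH[(n : ℝ) - 1]).restrict (frontier (dom u)),
      IsOuterNormalAt (dom u) (N y) y) :
    Integrable (fun x : E n => |ζ (grad u x)| * expNeg (u x) * ‖x‖ ^ (q - (n : ℝ))) ∧
    IntegrableOn (fun y => |ρ (N y)| * expNeg (u y) * ‖y‖ ^ (q - (n : ℝ)))
      (frontier (dom u)) μH[(n : ℝ) - 1] := by
  obtain _ | m := n
  · have : IsFiniteMeasure (volume : Measure (E 0)) := CompactSpace.isFiniteMeasure
    refine ⟨Integrable.of_finite, ?_⟩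
    rw [(isClopen_discrete (dom u)).frontier_eq]
    exact integrableOn_empty
  obtain ⟨a, b, ha, hab⟩ := exists_growth hu (interior_subset h0)
  obtain ⟨hc, -⟩ := hu
  have hconv := convexOn_toReal hc
  -- Lipschitz bound near the origin
  obtain ⟨K, t, ht, hK⟩ := hconv.locallyLipschitzOn_interior h0
  rw [isOpen_interior.nhdsWithin_eq h0] at ht
  obtain ⟨r, hr, hball⟩ := Metric.mem_nhds_iff.1 (inter_mem ht (isOpen_interior.mem_nhds h0))
  have hgrad : ∀ x : E (m + 1), ‖x‖ < r → ‖grad u x‖ ≤ K := by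
    intro x hx
    have hng : ‖grad u x‖ = ‖fderiv ℝ (fun y => (u y).toReal) x‖ := by
      unfold grad gradient; simp
    rw [hng]
    exact norm_fderiv_le_of_lipschitzOn ℝ (isOpen_ball.mem_nhds (by simpa using hx))
      (hK.mono (hball.trans inter_subset_left))
  obtain ⟨C, hC0, hC⟩ := rpow_exp_bdd (q - ((m + 1 : ℕ) : ℝ)) (a / 2) r (by positivity) hr
  have hexp : ∀ x, expNeg (u x) ≤ Real.exp b * Real.exp (-a * ‖x‖) := by
    intro x
    rw [expNeg_eq]
    have h1 := hfun_le hab x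
    refine (mul_le_mul h1 h1 (hfun_nonneg u x) (by positivity)).trans (le_of_eq ?_)
    simp only [← Real.exp_add]; ring_nf
  have hm1 := measurable_expNeg hc
  have hm2 : Measurable (fun x : E (m + 1) => ‖x‖ ^ (q - ((m + 1 : ℕ) : ℝ))) :=
    measurable_norm.pow_const _
  constructor
  · have hI1 := (integrable_radial m q a hq ha).const_mul ((|ζ 0| + L * K) * Real.exp b)
    have hI2 := (integrable_grad hc ha hab).const_mul (L * (Real.exp (b / 2) * C))
    refine (hI1.add hI2).mono' ?_ (ae_of_all _ fun x => ?_)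
    · exact (((hζ.cont.measurable.comp (measurable_grad u)).abs.mul hm1).mul
        hm2).aestronglyMeasurable
    have hw : 0 ≤ ‖x‖ ^ (q - ((m + 1 : ℕ) : ℝ)) := Real.rpow_nonneg (norm_nonneg _) _
    set w := ‖x‖ ^ (q - ((m + 1 : ℕ) : ℝ)) with hwdef
    have he0 := expNeg_nonneg (u x)
    rw [Real.norm_of_nonneg (mul_nonneg (mul_nonneg (abs_nonneg _) he0) hw)]
    have hz : |ζ (grad u x)| ≤ |ζ 0| + L * ‖grad u x‖ := by
      have h1 := hLip.dist_le_mul (grad u x) 0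
      rw [Real.dist_eq, dist_zero_right] at h1
      have h2 := abs_sub_abs_le_abs_sub (ζ (grad u x)) (ζ 0)
      linarith
    have hew : expNeg (u x) * w ≤ Real.exp b * (Real.exp (-a * ‖x‖) * w) := by
      have := mul_le_mul_of_nonneg_right (hexp x) hw
      linarith
    have hew0 : 0 ≤ expNeg (u x) * w := mul_nonneg he0 hw
    have hh := hfun_nonneg u x
    have hsplit : |ζ (grad u x)| * expNeg (u x) * w ≤
        |ζ 0| * (expNeg (u x) * w) + L * ‖grad u x‖ * (expNeg (u x) * w) := by
      have := mul_le_mul_of_nonneg_right hz hew0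
      linarith
    have hA : |ζ 0| * (expNeg (u x) * w) ≤
        |ζ 0| * (Real.exp b * (Real.exp (-a * ‖x‖) * w)) :=
      mul_le_mul_of_nonneg_left hew (abs_nonneg _)
    have hLK : 0 ≤ (L : ℝ) * K := by positivity
    have hP1 : 0 ≤ (L : ℝ) * K * (Real.exp b * (Real.exp (-a * ‖x‖) * w)) := by positivity
    have hP2 : 0 ≤ (L : ℝ) * (Real.exp (b / 2) * C) * (‖grad u x‖ * hfun u x) := by positivity
    have hB : L * ‖grad u x‖ * (expNeg (u x) * w) ≤
        (L : ℝ) * K * (Real.exp b * (Real.exp (-a * ‖x‖) * w)) +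
        (L : ℝ) * (Real.exp (b / 2) * C) * (‖grad u x‖ * hfun u x) := by
      by_cases hx : ‖x‖ < r
      · have h1 : L * ‖grad u x‖ * (expNeg (u x) * w) ≤
            (L : ℝ) * K * (Real.exp b * (Real.exp (-a * ‖x‖) * w)) :=
          mul_le_mul (mul_le_mul_of_nonneg_left (hgrad x hx) L.coe_nonneg) hew hew0 hLK
        linarith
      · have h1 := hC ‖x‖ (not_lt.1 hx)
        have h2 : expNeg (u x) * w ≤ (Real.exp (b / 2) * C) * hfun u x := by
          rw [expNeg_eq]
          calc hfun u x * hfun u x * w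
              ≤ (Real.exp (b / 2) * Real.exp (-(a / 2) * ‖x‖)) * hfun u x * w := by
                gcongr; exact hfun_le hab x
            _ = Real.exp (b / 2) * (w * Real.exp (-(a / 2) * ‖x‖)) * hfun u x := by ring
            _ ≤ _ := by gcongr
        have h3 : 0 ≤ (L : ℝ) * ‖grad u x‖ := by positivity
        have h4 := mul_le_mul_of_nonneg_left h2 h3
        linarith
    simp only [Pi.add_apply]
    linarith
  · have hcast : (((m + 1 : ℕ) : ℝ) - 1) = (m : ℝ) := by push_cast; ring
    rw [hcast] at hN ⊢
    obtain ⟨M, hM⟩ := (isCompact_sphere (0 : E (m + 1)) 1).bddAbove_image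
      (hζ.rec_cont.abs.continuousOn)
    have hI : Integrable (fun y : E (m + 1) => Real.exp (-(a / 2) * ‖y‖))
        ((μH[(m : ℝ)]).restrict (frontier (dom u))) := by
      refine ⟨(by fun_prop : Continuous _).aestronglyMeasurable, ?_⟩
      have := frontier_integral hconv.1 ⟨0, h0⟩ (c := a / 2) (by positivity)
      refine lt_of_eq_of_lt (lintegral_congr fun y => ?_) this
      exact Real.enorm_of_nonneg (Real.exp_pos _).le
    refine (hI.const_mul (M * (Real.exp b * C))).mono' ?_ ?_
    · exact (((hζ.rec_cont.measurable.comp hNmeas).abs.mul hm1).mul hm2).aestronglyMeasurable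
    filter_upwards [hN, ae_restrict_mem isClosed_frontier.measurableSet] with y hy hyf
    have hyr : r ≤ ‖y‖ := by
      by_contra h
      exact hyf.2 (hball (by simpa using h)).2
    have h1 := hC ‖y‖ hyr
    have hw : 0 ≤ ‖y‖ ^ (q - ((m + 1 : ℕ) : ℝ)) := Real.rpow_nonneg (norm_nonneg _) _
    set w := ‖y‖ ^ (q - ((m + 1 : ℕ) : ℝ)) with hwdef
    have he0 := expNeg_nonneg (u y)
    rw [Real.norm_of_nonneg (mul_nonneg (mul_nonneg (abs_nonneg _) he0) hw)]
    have hMy : |ρ (N y)| ≤ M := hM ⟨N y, by simpa using hy.1, rfl⟩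
    have hsq : Real.exp (-a * ‖y‖) = Real.exp (-(a / 2) * ‖y‖) * Real.exp (-(a / 2) * ‖y‖) := by
      rw [← Real.exp_add]; ring_nf
    have h2 : expNeg (u y) * w ≤ Real.exp b * C * Real.exp (-(a / 2) * ‖y‖) := by
      calc expNeg (u y) * w ≤ Real.exp b * Real.exp (-a * ‖y‖) * w := by
            gcongr; exact hexp y
        _ = Real.exp b * (w * Real.exp (-(a / 2) * ‖y‖)) * Real.exp (-(a / 2) * ‖y‖) := by
            rw [hsq]; ring
        _ ≤ _ := by gcongr
    have h3 := mul_le_mul hMy h2 (mul_nonneg he0 hw) ((abs_nonneg _).trans hMy)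
    linarith

end PaperJU

end
end
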